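/- Reformulated symmetrized Talagrand inequality: Let d ≥ 1. For every centered probability measure μ on ℝ^d and every probability measure ν on ℝ^d, both absolutely continuous with respect to Lebesgue measure with finite second moments and finite entropy relative to Lebesgue measure, one has inf_π ( − ∫ x·y dπ(x,y) ) ≤ Ent_{dx}(μ) + Ent_{dx}(ν) + d log(2π), where the infimum is over all couplings π of μ and ν. -/

import Mathlib

open MeasureTheory
open scoped RealInnerProductSpace ENNReal

/-- `π` is a coupling of `μ` and `ν`: a measure on the product with the given marginals. -/
def IsCoupling {E : Type*} [MeasurableSpace E] (π : Measure (E × E)) (μ ν : Measure E) : Prop :=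
  π.map Prod.fst = μ ∧ π.map Prod.snd = ν

/-!
By Kantorovich duality on `ℝ^d × ℝ^d`, some coupling `π` attains
`∫ x·y dπ = inf {∫ f dμ + ∫ g dν | x·y ≤ f x + g y}`, so it suffices to bound
`-(∫ f dμ + ∫ g dν)` for every such pair `(f, g)`. The functions `e^{-f}` and `e^{-g}` satisfy
`e^{-f x} e^{-g y} ≤ e^{-x·y}`, hence the functional Santaló inequality
`(inf_z ∫ e^{z·x - f x} dx) (∫ e^{-g y} dy) ≤ (2π)^d`. By the Gibbs variational principle, the
second factor is at least `exp (-∫ g dν - Ent ν)`, and each integral in the first one is at least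
`exp (∫ z·x dμ - ∫ f dμ - Ent μ)`, where `∫ z·x dμ = 0` since `μ` is centered. It remains to take
logarithms.

Duality comes from Hahn–Banach: the dual value is a sublinear functional of the gain, and a linear
functional that it dominates and that agrees with it at `x·y` is represented by a coupling through
the Riesz–Markov–Kakutani theorem.

The functional Santaló inequality for a pair `F x * G y ≤ e^{-x·y}` is proved by induction on the
dimension, following Lehec. An affine map brings `F dx` on `ℝ × E` to a position where the
hyperplane `{0} × E` halves it and both halves have their barycenters on the axis `ℝ × {0}`. On
each half-space, integrating over the first coordinate reduces the claim to `E`, at the cost of a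
factor `π / 2` that the multiplicative Prékopa–Leindler inequality on the half-line provides.
-/

section PrekopaLeindler

open Set
open scoped Pointwise

theorem volume_add_volume_le_volume_add_of_isCompact {K L : Set ℝ} (hK : IsCompact K)
    (hL : IsCompact L) (hK' : K.Nonempty) (hL' : L.Nonempty) :
    volume K + volume L ≤ volume (K + L) := by
  have hk := hK.sSup_mem hK'
  have hl := hL.sInf_mem hL'
  set k := sSup K
  set l := sInf L
  -- `l + K` and `k + L` lie in `K + L` and meet only at `l + k`.
  have hdisj : AEDisjoint volume (l +ᵥ K) (k +ᵥ L) := by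
    refine measure_mono_null (t := {l + k}) ?_ (by simp)
    rintro _ ⟨⟨a, ha, rfl⟩, b, hb, hab⟩
    have hak : a ≤ k := le_csSup hK.bddAbove ha
    have hlb : l ≤ b := csInf_le hL.bddBelow hb
    simp only [vadd_eq_add, mem_singleton_iff] at hab ⊢
    linarith
  calc volume K + volume L = volume (l +ᵥ K) + volume (k +ᵥ L) := by
        rw [measure_vadd, measure_vadd]
    _ = volume ((l +ᵥ K) ∪ (k +ᵥ L)) :=
        (measure_union₀ (hL.vadd k).measurableSet.nullMeasurableSet hdisj).symm
    _ ≤ volume (K + L) := by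
        refine measure_mono (union_subset ?_ ?_)
        · rintro _ ⟨a, ha, rfl⟩
          exact ⟨a, ha, l, hl, add_comm a l⟩
        · rintro _ ⟨b, hb, rfl⟩
          exact ⟨k, hk, b, hb, rfl⟩

theorem volume_add_volume_le_volume_add {A B : Set ℝ} (hA : MeasurableSet A)
    (hB : MeasurableSet B) (hA' : A.Nonempty) (hB' : B.Nonempty) :
    volume A + volume B ≤ volume (A + B) := by
  rcases eq_or_ne (volume A) 0 with hA0 | hA0
  · obtain ⟨a, ha⟩ := hA'
    rw [hA0, zero_add, ← measure_vadd volume a B]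
    exact measure_mono (singleton_vadd (a := a) (t := B) ▸ add_subset_add_right (by simpa))
  rcases eq_or_ne (volume B) 0 with hB0 | hB0
  · obtain ⟨b, hb⟩ := hB'
    rw [hB0, add_zero, ← measure_vadd volume b A, add_comm A]
    exact measure_mono (singleton_vadd (a := b) (t := A) ▸ add_subset_add_right (by simpa))
  refine le_of_forall_lt fun r hr => ?_
  obtain ⟨y, hy, z, hz, hyz⟩ := ENNReal.exists_lt_add_of_lt_add hr hA0 hB0
  obtain ⟨K, hKA, hK, hyK⟩ := hA.exists_lt_isCompact hy
  obtain ⟨L, hLB, hL, hzL⟩ := hB.exists_lt_isCompact hz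
  calc r < y + z := hyz
    _ ≤ volume K + volume L := add_le_add hyK.le hzL.le
    _ ≤ volume (K + L) := volume_add_volume_le_volume_add_of_isCompact hK hL
        (nonempty_of_measure_ne_zero (ne_bot_of_gt hyK))
        (nonempty_of_measure_ne_zero (ne_bot_of_gt hzL))
    _ ≤ volume (A + B) := measure_mono (add_subset_add hKA hLB)

theorem lintegral_eq_lintegral_Ioi_measure_lt {α : Type*} [MeasurableSpace α] {μ : Measure α}
    [SFinite μ] {f : α → ℝ≥0∞} (hf : Measurable f) :
    ∫⁻ x, f x ∂μ = ∫⁻ t in Ioi (0 : ℝ), μ {x | ENNReal.ofReal t < f x} := by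
  have hslice : ∀ a : ℝ≥0∞, volume {t : ℝ | 0 < t ∧ ENNReal.ofReal t < a} = a := fun a => by
    rcases eq_or_ne a ⊤ with rfl | ha
    · simp only [ENNReal.ofReal_lt_top, and_true]
      exact Real.volume_Ioi
    · have : {t : ℝ | 0 < t ∧ ENNReal.ofReal t < a} = Ioo 0 a.toReal := by
        ext t
        exact and_congr_right fun ht => ENNReal.ofReal_lt_iff_lt_toReal ht.le ha
      rw [this, Real.volume_Ioo, sub_zero, ENNReal.ofReal_toReal ha]
  have hS : MeasurableSet {p : α × ℝ | 0 < p.2 ∧ ENNReal.ofReal p.2 < f p.1} :=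
    (measurableSet_lt measurable_const measurable_snd).inter
      (measurableSet_lt measurable_snd.ennreal_ofReal (hf.comp measurable_fst))
  calc ∫⁻ x, f x ∂μ = (μ.prod volume) {p : α × ℝ | 0 < p.2 ∧ ENNReal.ofReal p.2 < f p.1} := by
        rw [Measure.prod_apply hS]
        exact lintegral_congr fun x => (hslice (f x)).symm
    _ = ∫⁻ t in Ioi (0 : ℝ), μ {x | ENNReal.ofReal t < f x} := by
        rw [Measure.prod_apply_symm hS, ← lintegral_indicator measurableSet_Ioi]
        refine lintegral_congr fun t => ?_
        by_cases ht : 0 < t <;> simp [ht]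

variable {p q : ℝ} {u v w : ℝ → ℝ≥0∞}

theorem lintegral_add_lintegral_le_of_iSup_eq_one (hp : 0 < p) (hq : 0 < q) (hpq : p + q = 1)
    (hu : Measurable u) (hv : Measurable v) (hw : Measurable w)
    (hu1 : ⨆ x, u x = 1) (hv1 : ⨆ x, v x = 1)
    (h : ∀ a b, u a ^ p * v b ^ q ≤ w (p * a + q * b)) :
    ENNReal.ofReal p * (∫⁻ x, u x) + ENNReal.ofReal q * (∫⁻ x, v x) ≤ ∫⁻ x, w x := by
  have hmeas : ∀ f : ℝ → ℝ≥0∞, Measurable fun t : ℝ => volume {x | ENNReal.ofReal t < f x} :=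
    fun f => Antitone.measurable fun s t hst =>
      measure_mono fun x hx => (ENNReal.ofReal_le_ofReal hst).trans_lt hx
  rw [lintegral_eq_lintegral_Ioi_measure_lt hu, lintegral_eq_lintegral_Ioi_measure_lt hv,
    lintegral_eq_lintegral_Ioi_measure_lt hw, ← lintegral_const_mul _ (hmeas u),
    ← lintegral_const_mul _ (hmeas v), ← lintegral_add_left ((hmeas u).const_mul _)]
  refine setLIntegral_mono (hmeas w) fun t ht => ?_
  rcases lt_or_ge t 1 with ht1 | ht1
  · have ht1 : ENNReal.ofReal t < 1 := by simpa using ht1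
    have ht0 : ENNReal.ofReal t ≠ 0 := by simpa using ht
    have hu_ne : ∃ x, ENNReal.ofReal t < u x := lt_iSup_iff.1 (ht1.trans_eq hu1.symm)
    have hv_ne : ∃ x, ENNReal.ofReal t < v x := lt_iSup_iff.1 (ht1.trans_eq hv1.symm)
    have hsub : p • {x | ENNReal.ofReal t < u x} + q • {x | ENNReal.ofReal t < v x} ⊆
        {x | ENNReal.ofReal t < w x} := by
      rintro _ ⟨_, ⟨a, ha, rfl⟩, _, ⟨b, hb, rfl⟩, rfl⟩
      calc ENNReal.ofReal t = ENNReal.ofReal t ^ p * ENNReal.ofReal t ^ q := by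
            rw [← ENNReal.rpow_add _ _ ht0 ENNReal.ofReal_ne_top, hpq, ENNReal.rpow_one]
        _ < u a ^ p * v b ^ q :=
            ENNReal.mul_lt_mul (ENNReal.rpow_lt_rpow ha hp) (ENNReal.rpow_lt_rpow hb hq)
        _ ≤ w (p * a + q * b) := h a b
    calc _ = volume (p • {x | ENNReal.ofReal t < u x}) +
          volume (q • {x | ENNReal.ofReal t < v x}) := by
          simp [Measure.addHaar_smul, abs_of_pos hp, abs_of_pos hq]
      _ ≤ volume (p • {x | ENNReal.ofReal t < u x} + q • {x | ENNReal.ofReal t < v x}) :=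
          volume_add_volume_le_volume_add
            ((measurableSet_lt measurable_const hu).const_smul₀ p)
            ((measurableSet_lt measurable_const hv).const_smul₀ q)
            (Nonempty.smul_set hu_ne) (Nonempty.smul_set hv_ne)
      _ ≤ volume {x | ENNReal.ofReal t < w x} := measure_mono hsub
  · have hempty : ∀ f : ℝ → ℝ≥0∞, ⨆ x, f x = 1 → {x | ENNReal.ofReal t < f x} = ∅ :=
      fun f hf => eq_empty_of_forall_notMem fun x hx => hx.not_ge <|
        (le_iSup f x).trans (hf.trans_le (by simpa using ht1))
    simp [hempty u hu1, hempty v hv1]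

theorem ennreal_rpow_mul_rpow_le_add (hp : 0 < p) (hq : 0 < q) (hpq : p + q = 1) (x y : ℝ≥0∞) :
    x ^ p * y ^ q ≤ ENNReal.ofReal p * x + ENNReal.ofReal q * y := by
  rcases eq_or_ne x ⊤ with rfl | hx
  · simp [ENNReal.mul_top, hp]
  rcases eq_or_ne y ⊤ with rfl | hy
  · simp [ENNReal.mul_top, hq]
  lift x to NNReal using hx
  lift y to NNReal using hy
  lift p to NNReal using hp.le
  lift q to NNReal using hq.le
  rw [ENNReal.ofReal_coe_nnreal, ENNReal.ofReal_coe_nnreal, ← ENNReal.coe_rpow_of_nonneg _ hp.le,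
    ← ENNReal.coe_rpow_of_nonneg _ hq.le]
  exact_mod_cast NNReal.geom_mean_le_arith_mean2_weighted p q x y (by exact_mod_cast hpq)

theorem lintegral_rpow_mul_lintegral_rpow_le_of_iSup_ne_top (hp : 0 < p) (hq : 0 < q)
    (hpq : p + q = 1) (hu : Measurable u) (hv : Measurable v) (hw : Measurable w)
    (hu' : ⨆ x, u x ≠ ⊤) (hv' : ⨆ x, v x ≠ ⊤)
    (h : ∀ a b, u a ^ p * v b ^ q ≤ w (p * a + q * b)) :
    (∫⁻ x, u x) ^ p * (∫⁻ x, v x) ^ q ≤ ∫⁻ x, w x := by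
  rcases eq_or_ne (⨆ x, u x) 0 with hu0 | hu0
  · simp [ENNReal.iSup_eq_zero.1 hu0, hp]
  rcases eq_or_ne (⨆ x, v x) 0 with hv0 | hv0
  · simp [ENNReal.iSup_eq_zero.1 hv0, hq]
  set α := ⨆ x, u x
  set β := ⨆ x, v x
  have hscale : ∀ x y : ℝ≥0∞,
      (α⁻¹ * x) ^ p * (β⁻¹ * y) ^ q = (α⁻¹ ^ p * β⁻¹ ^ q) * (x ^ p * y ^ q) := fun x y => by
    rw [ENNReal.mul_rpow_of_nonneg _ _ hp.le, ENNReal.mul_rpow_of_nonneg _ _ hq.le]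
    ring
  have hγ0 : α⁻¹ ^ p * β⁻¹ ^ q ≠ 0 := by simp [ENNReal.rpow_eq_zero_iff, hu', hv', hu0, hv0]
  have hγ1 : α⁻¹ ^ p * β⁻¹ ^ q ≠ ⊤ := ENNReal.mul_ne_top
    (ENNReal.rpow_ne_top_of_nonneg hp.le (by simpa))
    (ENNReal.rpow_ne_top_of_nonneg hq.le (by simpa))
  have hsum : ENNReal.ofReal p * (∫⁻ x, α⁻¹ * u x) + ENNReal.ofReal q * (∫⁻ x, β⁻¹ * v x) ≤
      ∫⁻ x, (α⁻¹ ^ p * β⁻¹ ^ q) * w x :=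
    lintegral_add_lintegral_le_of_iSup_eq_one hp hq hpq (hu.const_mul _) (hv.const_mul _)
      (hw.const_mul _) (by rw [← ENNReal.mul_iSup, ENNReal.inv_mul_cancel hu0 hu'])
      (by rw [← ENNReal.mul_iSup, ENNReal.inv_mul_cancel hv0 hv'])
      fun a b => (hscale _ _).trans_le (mul_le_mul_right (h a b) _)
  rw [lintegral_const_mul _ hu, lintegral_const_mul _ hv, lintegral_const_mul _ hw] at hsum
  refine (ENNReal.mul_le_mul_iff_right hγ0 hγ1).1 ?_
  rw [← hscale]
  exact (ennreal_rpow_mul_rpow_le_add hp hq hpq _ _).trans hsum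

theorem lintegral_rpow_mul_lintegral_rpow_le (hp : 0 < p) (hq : 0 < q) (hpq : p + q = 1)
    (hu : Measurable u) (hv : Measurable v) (hw : Measurable w)
    (h : ∀ a b, u a ^ p * v b ^ q ≤ w (p * a + q * b)) :
    (∫⁻ x, u x) ^ p * (∫⁻ x, v x) ^ q ≤ ∫⁻ x, w x := by
  have htrunc : ∀ {f : ℝ → ℝ≥0∞} {r : ℝ}, Measurable f → 0 < r →
      (∫⁻ x, f x) ^ r = ⨆ n : ℕ, (∫⁻ x, min (f x) n) ^ r := fun {f r} hf hr => by
    have hmono : Monotone fun (n : ℕ) x => min (f x) n :=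
      fun m n hmn x => min_le_min_left _ (by exact_mod_cast hmn)
    have hmap := (ENNReal.orderIsoRpow r hr).map_iSup fun n : ℕ => ∫⁻ x, min (f x) n
    simp only [ENNReal.orderIsoRpow_apply] at hmap
    rw [← hmap, ← lintegral_iSup (fun n => hf.min measurable_const) hmono]
    simp_rw [← inf_iSup_eq, ENNReal.iSup_natCast, inf_top_eq]
  have hfin : ∀ (f : ℝ → ℝ≥0∞) (n : ℕ), ⨆ x, min (f x) n ≠ ⊤ := fun f n =>
    ne_top_of_le_ne_top (ENNReal.natCast_ne_top n) (iSup_le fun x => min_le_right _ _)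
  rw [htrunc hu hp, htrunc hv hq]
  simp_rw [ENNReal.iSup_mul, ENNReal.mul_iSup]
  refine iSup₂_le fun m n => ?_
  refine lintegral_rpow_mul_lintegral_rpow_le_of_iSup_ne_top hp hq hpq
    (hu.min measurable_const) (hv.min measurable_const) hw (hfin u m) (hfin v n) fun a b => ?_
  exact (mul_le_mul' (ENNReal.rpow_le_rpow (min_le_left _ _) hp.le)
    (ENNReal.rpow_le_rpow (min_le_left _ _) hq.le)).trans (h a b)

theorem setLIntegral_Ioi_zero_eq_lintegral_exp (f : ℝ → ℝ≥0∞) :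
    ∫⁻ s in Ioi (0 : ℝ), f s = ∫⁻ a, ENNReal.ofReal (Real.exp a) * f (Real.exp a) := by
  have := lintegral_image_eq_lintegral_abs_deriv_mul (s := univ) MeasurableSet.univ
    (fun x _ => (Real.hasDerivAt_exp x).hasDerivWithinAt) Real.exp_injective.injOn f
  rw [image_univ, Real.range_exp] at this
  simpa using this

-- The substitution `s = exp a` turns geometric means into arithmetic means.
theorem setLIntegral_Ioi_rpow_mul_setLIntegral_Ioi_rpow_le (hp : 0 < p) (hq : 0 < q)
    (hpq : p + q = 1) (hu : Measurable u) (hv : Measurable v) (hw : Measurable w)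
    (h : ∀ s > 0, ∀ t > 0, u s ^ p * v t ^ q ≤ w (s ^ p * t ^ q)) :
    (∫⁻ s in Ioi 0, u s) ^ p * (∫⁻ t in Ioi 0, v t) ^ q ≤ ∫⁻ r in Ioi 0, w r := by
  simp only [setLIntegral_Ioi_zero_eq_lintegral_exp]
  refine lintegral_rpow_mul_lintegral_rpow_le hp hq hpq (by fun_prop) (by fun_prop) (by fun_prop)
    fun a b => ?_
  have hexp : Real.exp a ^ p * Real.exp b ^ q = Real.exp (p * a + q * b) := by
    rw [← Real.exp_mul, ← Real.exp_mul, ← Real.exp_add, mul_comm a, mul_comm b]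
  rw [ENNReal.mul_rpow_of_nonneg _ _ hp.le, ENNReal.mul_rpow_of_nonneg _ _ hq.le,
    mul_mul_mul_comm, ENNReal.ofReal_rpow_of_pos (Real.exp_pos a),
    ENNReal.ofReal_rpow_of_pos (Real.exp_pos b), ← ENNReal.ofReal_mul (by positivity), ← hexp]
  exact mul_le_mul_right (h _ (Real.exp_pos a) _ (Real.exp_pos b)) _

theorem lintegral_Ioi_exp_neg_sq_div_two :
    ∫⁻ s in Ioi (0 : ℝ), ENNReal.ofReal (Real.exp (-(s ^ 2 / 2))) =
      ENNReal.ofReal (Real.pi / 2) ^ (1 / 2 : ℝ) := by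
  have hexp : ∀ s : ℝ, -(s ^ 2 / 2) = -(1 / 2) * s ^ 2 := fun s => by ring
  simp_rw [hexp]
  rw [← ofReal_integral_eq_lintegral_ofReal
      (integrable_exp_neg_mul_sq (by norm_num)).integrableOn (ae_of_all _ fun s => by positivity),
    integral_gaussian_Ioi, ENNReal.ofReal_rpow_of_nonneg (by positivity) (by positivity),
    ← Real.sqrt_eq_rpow]
  congr 1
  rw [show Real.pi / (1 / 2) = 2 ^ 2 * (Real.pi / 2) by ring, Real.sqrt_mul (by norm_num),
    Real.sqrt_sq (by norm_num), mul_div_cancel_left₀ _ two_ne_zero]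

theorem setLIntegral_Ioi_mul_setLIntegral_Ioi_le {K : ℝ≥0∞} (hu : Measurable u)
    (hv : Measurable v)
    (h : ∀ s > 0, ∀ t > 0, u s * v t ≤ K * ENNReal.ofReal (Real.exp (-(s * t)))) :
    (∫⁻ s in Ioi 0, u s) * ∫⁻ t in Ioi 0, v t ≤ K * ENNReal.ofReal (Real.pi / 2) := by
  have hhalf : (0 : ℝ) ≤ 1 / 2 := by norm_num
  have hsqrt : ∀ s > 0, ∀ t > 0, Real.exp (-(s * t)) ^ (1 / 2 : ℝ) =
      Real.exp (-((s ^ (1 / 2 : ℝ) * t ^ (1 / 2 : ℝ)) ^ 2 / 2)) := fun s hs t ht => by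
    simp_rw [← Real.sqrt_eq_rpow]
    rw [mul_pow, Real.sq_sqrt hs.le, Real.sq_sqrt ht.le, ← Real.exp_half, neg_div]
  have hle : (∫⁻ s in Ioi 0, u s) ^ (1 / 2 : ℝ) * (∫⁻ t in Ioi 0, v t) ^ (1 / 2 : ℝ) ≤
      ∫⁻ r in Ioi (0 : ℝ), K ^ (1 / 2 : ℝ) * ENNReal.ofReal (Real.exp (-(r ^ 2 / 2))) := by
    refine setLIntegral_Ioi_rpow_mul_setLIntegral_Ioi_rpow_le (by norm_num) (by norm_num)
      (by norm_num) hu hv (by fun_prop) fun s hs t ht => ?_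
    rw [← hsqrt s hs t ht, ← ENNReal.ofReal_rpow_of_pos (Real.exp_pos _),
      ← ENNReal.mul_rpow_of_nonneg _ _ hhalf, ← ENNReal.mul_rpow_of_nonneg _ _ hhalf]
    exact ENNReal.rpow_le_rpow (h s hs t ht) hhalf
  rw [lintegral_const_mul _ (by fun_prop), lintegral_Ioi_exp_neg_sq_div_two,
    ← ENNReal.mul_rpow_of_nonneg _ _ hhalf, ← ENNReal.mul_rpow_of_nonneg _ _ hhalf] at hle
  exact (ENNReal.rpow_le_rpow_iff (by norm_num)).1 hle

end PrekopaLeindler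

section Jensen

variable {α : Type*} [MeasurableSpace α]

theorem measure_univ_mul_exp_average_le {m : Measure α} [IsFiniteMeasure m] {ψ : α → ℝ}
    (hψ : Integrable ψ m) :
    m Set.univ * ENNReal.ofReal (Real.exp (⨍ x, ψ x ∂m)) ≤
      ∫⁻ x, ENNReal.ofReal (Real.exp (ψ x)) ∂m := by
  rcases eq_or_ne m 0 with rfl | hm
  · simp
  by_cases htop : ∫⁻ x, ENNReal.ofReal (Real.exp (ψ x)) ∂m = ⊤
  · exact htop ▸ le_top
  have : NeZero m := ⟨hm⟩
  have hpos : 0 ≤ᵐ[m] fun x => Real.exp (ψ x) := ae_of_all _ fun x => (Real.exp_pos _).le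
  have hexp : Integrable (fun x => Real.exp (ψ x)) m :=
    (lintegral_ofReal_ne_top_iff_integrable (by fun_prop) hpos).1 htop
  have hjensen : Real.exp (⨍ x, ψ x ∂m) ≤ ⨍ x, Real.exp (ψ x) ∂m :=
    convexOn_exp.map_average_le Real.continuous_exp.continuousOn isClosed_univ
      (ae_of_all _ fun _ => Set.mem_univ _) hψ hexp
  calc m Set.univ * ENNReal.ofReal (Real.exp (⨍ x, ψ x ∂m))
      = ENNReal.ofReal (m.real Set.univ * Real.exp (⨍ x, ψ x ∂m)) := by
        rw [ENNReal.ofReal_mul measureReal_nonneg, ofReal_measureReal]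
    _ ≤ ENNReal.ofReal (m.real Set.univ • ⨍ x, Real.exp (ψ x) ∂m) := by
        rw [smul_eq_mul]; gcongr
    _ = ∫⁻ x, ENNReal.ofReal (Real.exp (ψ x)) ∂m := by
        rw [measure_smul_average, ofReal_integral_eq_lintegral_ofReal hexp hpos]

theorem ofReal_exp_integral_sub_integral_log_le {m μ : Measure α} [SFinite m]
    [IsProbabilityMeasure μ] {h φ : α → ℝ} (hμ : μ = m.withDensity fun x => ENNReal.ofReal (h x))
    (hφ : Integrable φ μ) (hent : Integrable (fun x => Real.log (h x)) μ) :
    ENNReal.ofReal (Real.exp ((∫ x, φ x ∂μ) - ∫ x, Real.log (h x) ∂μ)) ≤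
      ∫⁻ x, ENNReal.ofReal (Real.exp (φ x)) ∂m := by
  obtain ⟨k, hk, hkh, hμk⟩ := exists_measurable_le_withDensity_eq m fun x => ENNReal.ofReal (h x)
  calc ENNReal.ofReal (Real.exp ((∫ x, φ x ∂μ) - ∫ x, Real.log (h x) ∂μ))
      ≤ ∫⁻ x, ENNReal.ofReal (Real.exp (φ x - Real.log (h x))) ∂μ := by
        simpa [average_eq_integral, integral_sub hφ hent] using
          measure_univ_mul_exp_average_le (hφ.sub hent)
    _ ≤ ∫⁻ x, k x * ENNReal.ofReal (Real.exp (φ x - Real.log (h x))) ∂m := by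
        rw [hμ, ← hμk]
        exact lintegral_withDensity_le_lintegral_mul m hk _
    _ ≤ ∫⁻ x, ENNReal.ofReal (Real.exp (φ x)) ∂m := by
        refine lintegral_mono fun x => (mul_le_mul_left (hkh x) _).trans ?_
        rcases le_or_gt (h x) 0 with hx | hx
        · simp [ENNReal.ofReal_of_nonpos hx]
        · rw [← ENNReal.ofReal_mul hx.le, Real.exp_sub, Real.exp_log hx,
            mul_div_cancel₀ _ hx.ne']

theorem measure_univ_le_lintegral_exp_inner {E : Type*} [NormedAddCommGroup E]
    [InnerProductSpace ℝ E] [CompleteSpace E] {m : Measure α} [IsFiniteMeasure m] {X : α → E}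
    (hX : Integrable X m) (hcent : ∫ a, X a ∂m = 0) (z : E) :
    m Set.univ ≤ ∫⁻ a, ENNReal.ofReal (Real.exp ⟪z, X a⟫) ∂m := by
  have hz : ∫ a, ⟪z, X a⟫ ∂m = 0 := (integral_inner hX z).trans (by simp [hcent])
  simpa [average_eq, hz] using measure_univ_mul_exp_average_le (hX.const_inner z)

end Jensen

section Balancing

open Set Filter

theorem exists_measure_Ioi_eq_half (ρ : Measure ℝ) [IsFiniteMeasure ρ] [NullSingletonClass ρ] :
    ∃ c, ρ (Ioi c) = ρ univ / 2 ∧ ρ (Iio c) = ρ univ / 2 := by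
  rcases eq_or_ne ρ 0 with rfl | hρ
  · exact ⟨0, by simp⟩
  have : NeZero ρ := ⟨hρ⟩
  have hhalf : ρ.real univ / 2 < ρ.real univ := half_lt_self measureReal_univ_pos
  have htoReal := ENNReal.tendsto_toReal (measure_ne_top ρ univ)
  have hadd : ∀ c, ρ.real (Iic c) + ρ.real (Ioi c) = ρ.real univ := fun c => by
    rw [← compl_Iic, measureReal_add_measureReal_compl measurableSet_Iic]
  have hcont : Continuous fun c => ρ.real (Iic c) := by
    have hprim : ∀ c, ρ.real (Iic c) = (∫ _ in (0 : ℝ)..c, (1 : ℝ) ∂ρ) + ρ.real (Iic 0) :=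
      fun c => by rw [intervalIntegral.integral_const_of_cdf, smul_eq_mul, mul_one, sub_add_cancel]
    rw [funext hprim]
    exact (intervalIntegral.continuous_primitive (fun a b => by simp) 0).add continuous_const
  obtain ⟨a, ha⟩ : ∃ a, ρ.real (Iic a) ≤ ρ.real univ / 2 := by
    obtain ⟨a, ha⟩ :=
      ((htoReal.comp (tendsto_measure_Ici_atBot ρ)).eventually_const_lt hhalf).exists
    have ha : ρ.real univ / 2 < ρ.real (Ioi a) := by
      rwa [measureReal_congr Ioi_ae_eq_Ici]
    exact ⟨a, by linarith [hadd a]⟩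
  obtain ⟨b, hb⟩ := ((htoReal.comp (tendsto_measure_Iic_atTop ρ)).eventually_const_lt hhalf).exists
  obtain ⟨c, hc⟩ := mem_range_of_exists_le_of_exists_ge hcont ⟨a, ha⟩ ⟨b, hb.le⟩
  have hmeasure : ∀ S : Set ℝ, ρ.real S = ρ.real univ / 2 → ρ S = ρ univ / 2 := fun S hS => by
    rw [← ofReal_measureReal, hS, ENNReal.ofReal_div_of_pos two_pos, ofReal_measureReal,
      ENNReal.ofReal_ofNat]
  exact ⟨c, hmeasure _ (by linarith [hadd c]),
    hmeasure _ (by rwa [measureReal_congr Iio_ae_eq_Iic])⟩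

theorem exists_measure_fst_preimage_Ioi_eq_half {β : Type*} [MeasurableSpace β] {ν : Measure β}
    [SFinite ν] {m : Measure (ℝ × β)} [IsFiniteMeasure m] (hm : m ≪ volume.prod ν) :
    ∃ c, m (Prod.fst ⁻¹' Ioi c) = m univ / 2 ∧ m (Prod.fst ⁻¹' Iio c) = m univ / 2 := by
  have : NullSingletonClass (m.map Prod.fst) := ⟨fun c => by
    rw [Measure.map_apply measurable_fst (measurableSet_singleton c), ← prod_univ]
    exact hm (by simp)⟩
  obtain ⟨c, hpos, hneg⟩ := exists_measure_Ioi_eq_half (m.map Prod.fst)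
  rw [Measure.map_apply measurable_fst MeasurableSet.univ, preimage_univ] at hpos hneg
  rw [Measure.map_apply measurable_fst measurableSet_Ioi] at hpos
  rw [Measure.map_apply measurable_fst measurableSet_Iio] at hneg
  exact ⟨c, hpos, hneg⟩

variable {α : Type*} [MeasurableSpace α] {m : Measure α}

theorem setIntegral_pos_of_forall_pos {S : Set α} {τ : α → ℝ} (hS : MeasurableSet S)
    (hτ : IntegrableOn τ S m) (hpos : ∀ a ∈ S, 0 < τ a) (hmS : m S ≠ 0) : 0 < ∫ a in S, τ a ∂m := by
  rw [setIntegral_pos_iff_support_of_nonneg_ae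
      (ae_restrict_of_forall_mem hS fun a ha => (hpos a ha).le) hτ,
    inter_eq_right.2 fun a ha => Function.mem_support.2 (hpos a ha).ne']
  exact hmS.bot_lt

-- The two conditions form a linear system for `z` and `w`, whose determinant does not vanish
-- because `∫ a in S, τ a` and `∫ a in T, τ a` have opposite signs.
theorem exists_setIntegral_sub_sub_smul_eq_zero {E : Type*} [NormedAddCommGroup E]
    [NormedSpace ℝ E] [CompleteSpace E] [IsFiniteMeasure m] {S T : Set α} {τ : α → ℝ} {X : α → E}
    (hS : MeasurableSet S) (hT : MeasurableSet T) (hmS : m S ≠ 0) (hmT : m T ≠ 0)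
    (hτ : Integrable τ m) (hX : Integrable X m) (hτS : ∀ a ∈ S, 0 < τ a)
    (hτT : ∀ a ∈ T, τ a < 0) :
    ∃ z w : E, (∫ a in S, (X a - z - τ a • w) ∂m = 0) ∧ ∫ a in T, (X a - z - τ a • w) ∂m = 0 := by
  set s := ∫ a in S, τ a ∂m
  set t := ∫ a in T, τ a ∂m
  set x := ∫ a in S, X a ∂m
  set y := ∫ a in T, X a ∂m
  have hs : 0 < s := setIntegral_pos_of_forall_pos hS hτ.integrableOn hτS hmS
  have ht : 0 < -t := by
    rw [← integral_neg]
    exact setIntegral_pos_of_forall_pos hT hτ.neg.integrableOn (fun a ha => neg_pos.2 (hτT a ha))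
      hmT
  have hS0 : 0 < m.real S := ENNReal.toReal_pos hmS (measure_ne_top _ _)
  have hT0 : 0 < m.real T := ENNReal.toReal_pos hmT (measure_ne_top _ _)
  have hdet : m.real S * t - m.real T * s ≠ 0 := by nlinarith
  have hint : ∀ (R : Set α) (z w : E), ∫ a in R, (X a - z - τ a • w) ∂m =
      (∫ a in R, X a ∂m) - m.real R • z - (∫ a in R, τ a ∂m) • w := fun R z w => by
    have hXz : Integrable (fun a => X a - z) m := hX.sub (integrable_const z)
    rw [integral_sub hXz.integrableOn (hτ.integrableOn.smul_const w),
      integral_sub hX.integrableOn (integrable_const z), setIntegral_const, integral_smul_const]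
  refine ⟨(m.real S * t - m.real T * s)⁻¹ • (t • x - s • y),
    (m.real S * t - m.real T * s)⁻¹ • (m.real S • y - m.real T • x), ?_, ?_⟩
  all_goals
    rw [hint]
    match_scalars <;> field_simp <;> ring

/-- The hyperplane `{p | p.1 = 0}` halves the measure `m` on `ℝ × E`, and the two halves of `m`
have their barycenters on the line `ℝ × {0}`. -/
structure IsBalanced {E : Type*} [NormedAddCommGroup E] [NormedSpace ℝ E] [MeasurableSpace E]
    (m : Measure (ℝ × E)) : Prop where
  integrable_snd : Integrable Prod.snd m
  measure_pos : m {p | 0 < p.1} = m univ / 2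
  measure_neg : m {p | p.1 < 0} = m univ / 2
  setIntegral_pos : ∫ p in {p | 0 < p.1}, p.2 ∂m = 0
  setIntegral_neg : ∫ p in {p | p.1 < 0}, p.2 ∂m = 0

/-- The shear of `ℝ × E` along `E` that moves `(1, 0)` to `(1, w)`. -/
def shear {E : Type*} [AddCommGroup E] [Module ℝ E] (w : E) (p : ℝ × E) : ℝ × E :=
  (p.1, p.2 + p.1 • w)

variable {E : Type*} [NormedAddCommGroup E] [InnerProductSpace ℝ E] [FiniteDimensional ℝ E]
  [MeasurableSpace E] [BorelSpace E]

@[fun_prop]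
theorem measurable_shear (w : E) : Measurable (shear w) := by
  unfold shear
  fun_prop

theorem measurePreserving_shear (w : E) : MeasurePreserving (shear w) :=
  (MeasurePreserving.id _).skew_product (g := fun r x => x + r • w) (by fun_prop) <|
    ae_of_all _ fun r => map_add_right_eq_self volume (r • w)

theorem exists_isBalanced_map_shear {m : Measure (ℝ × E)} [IsFiniteMeasure m]
    (hm : m ≪ volume) (hm1 : Integrable id m) :
    ∃ (a : ℝ × E) (w : E), IsBalanced (m.map fun p => shear (-w) (p - a)) := by
  rcases eq_or_ne m 0 with rfl | hm0
  · exact ⟨0, 0, by constructor <;> simp⟩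
  obtain ⟨c, hpos, hneg⟩ := exists_measure_fst_preimage_Ioi_eq_half hm
  have hhalf : m univ / 2 ≠ 0 := by simpa using hm0
  obtain ⟨z, w, hz, hw⟩ := exists_setIntegral_sub_sub_smul_eq_zero (m := m) (X := Prod.snd)
    (τ := fun p => p.1 - c) (measurable_fst measurableSet_Ioi) (measurable_fst measurableSet_Iio)
    (hpos.trans_ne hhalf) (hneg.trans_ne hhalf) (hm1.fst.sub (integrable_const c)) hm1.snd
    (fun p hp => sub_pos.2 hp) (fun p hp => sub_neg.2 hp)
  have hB : Measurable fun p : ℝ × E => shear (-w) (p - (c, z)) := by fun_prop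
  have hB_snd : ∀ p : ℝ × E, (shear (-w) (p - (c, z))).2 = p.2 - z - (p.1 - c) • w := fun p => by
    simp [shear, sub_eq_add_neg]
  have hB_pos : (fun p : ℝ × E => shear (-w) (p - (c, z))) ⁻¹' {p | 0 < p.1} =
      Prod.fst ⁻¹' Ioi c := by ext p; simp [shear]
  have hB_neg : (fun p : ℝ × E => shear (-w) (p - (c, z))) ⁻¹' {p | p.1 < 0} =
      Prod.fst ⁻¹' Iio c := by ext p; simp [shear]
  have hposm : MeasurableSet {p : ℝ × E | 0 < p.1} := measurable_fst measurableSet_Ioi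
  have hnegm : MeasurableSet {p : ℝ × E | p.1 < 0} := measurable_fst measurableSet_Iio
  refine ⟨(c, z), w, ?_, ?_, ?_, ?_, ?_⟩
  · rw [integrable_map_measure (by fun_prop) hB.aemeasurable]
    exact ((hm1.snd.sub (integrable_const z)).sub
      ((hm1.fst.sub (integrable_const c)).smul_const w)).congr
        (ae_of_all _ fun p => (hB_snd p).symm)
  · rw [Measure.map_apply hB hposm, Measure.map_apply hB MeasurableSet.univ, hB_pos, hpos,
      preimage_univ]
  · rw [Measure.map_apply hB hnegm, Measure.map_apply hB MeasurableSet.univ, hB_neg, hneg,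
      preimage_univ]
  · rw [setIntegral_map hposm (by fun_prop) hB.aemeasurable, hB_pos]
    simpa only [hB_snd] using hz
  · rw [setIntegral_map hnegm (by fun_prop) hB.aemeasurable, hB_neg]
    simpa only [hB_snd] using hw

end Balancing

section Santalo

open Set Filter

section Truncation

variable {F : Type*} [NormedAddCommGroup F]

/-- The restriction of `min f k` to the ball of radius `k`. -/
noncomputable def truncation (f : F → ℝ≥0∞) (k : ℕ) : F → ℝ≥0∞ :=
  (Metric.closedBall 0 k).indicator fun x => min (f x) k

theorem truncation_le (f : F → ℝ≥0∞) (k : ℕ) : truncation f k ≤ f :=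
  (indicator_le_self _ _).trans fun _ => min_le_left _ _

variable [MeasurableSpace F] [OpensMeasurableSpace F] {f : F → ℝ≥0∞}

theorem measurable_truncation (hf : Measurable f) (k : ℕ) : Measurable (truncation f k) :=
  (hf.min measurable_const).indicator Metric.isClosed_closedBall.measurableSet

theorem iSup_lintegral_truncation (hf : Measurable f) (μ : Measure F) :
    ⨆ k, ∫⁻ x, truncation f k x ∂μ = ∫⁻ x, f x ∂μ := by
  rw [← lintegral_iSup (measurable_truncation hf)]
  · refine lintegral_congr fun x => ?_
    obtain ⟨n, hn⟩ := exists_nat_ge ‖x‖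
    refine le_antisymm (iSup_le fun k => truncation_le f k x) ?_
    refine le_of_forall_lt fun c hc => ?_
    obtain ⟨j, hj⟩ := ENNReal.exists_nat_gt hc.ne_top
    refine lt_iSup_iff.2 ⟨max n j, ?_⟩
    have hx : x ∈ Metric.closedBall (0 : F) (max n j : ℕ) := by
      simpa using Or.inl hn
    rw [truncation, indicator_of_mem hx]
    exact lt_min hc (hj.trans_le (by exact_mod_cast le_max_right n j))
  · intro j k hjk
    refine indicator_le fun x hx => ?_
    rw [truncation, indicator_of_mem
      (Metric.closedBall_subset_closedBall (by exact_mod_cast hjk) hx)]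
    exact min_le_min_left _ (by exact_mod_cast hjk)

theorem isFiniteMeasure_withDensity_truncation [ProperSpace F] {μ : Measure F}
    [IsFiniteMeasureOnCompacts μ] (f : F → ℝ≥0∞) (k : ℕ) :
    IsFiniteMeasure (μ.withDensity (truncation f k)) := by
  refine isFiniteMeasure_withDensity (ne_top_of_le_ne_top ?_ (lintegral_mono fun x =>
    indicator_le_indicator (g := fun _ => (k : ℝ≥0∞)) (min_le_right (f x) k)))
  rw [lintegral_indicator_const Metric.isClosed_closedBall.measurableSet]
  exact ENNReal.mul_ne_top (ENNReal.natCast_ne_top k) measure_closedBall_lt_top.ne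

theorem integrable_id_withDensity_truncation [ProperSpace F] {μ : Measure F}
    [IsFiniteMeasureOnCompacts μ] (f : F → ℝ≥0∞) (k : ℕ) :
    Integrable id (μ.withDensity (truncation f k)) := by
  have := isFiniteMeasure_withDensity_truncation (μ := μ) f k
  refine Integrable.of_bound (by fun_prop) k ?_
  have hball : ∀ᵐ x ∂μ.withDensity (truncation f k), x ∈ Metric.closedBall (0 : F) k := by
    rw [truncation, withDensity_indicator Metric.isClosed_closedBall.measurableSet]
    exact (withDensity_absolutelyContinuous _ _).ae_le
      (ae_restrict_mem Metric.isClosed_closedBall.measurableSet)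
  exact hball.mono fun x hx => mem_closedBall_zero_iff.1 hx

end Truncation

variable {E : Type*} [NormedAddCommGroup E] [InnerProductSpace ℝ E] [FiniteDimensional ℝ E]
  [MeasurableSpace E] [BorelSpace E]

theorem map_withDensity_comp {α β : Type*} [MeasurableSpace α] [MeasurableSpace β]
    {μ : Measure α} {ν : Measure β} {T : α → β} (hT : MeasurePreserving T μ ν) {f : β → ℝ≥0∞}
    (hf : Measurable f) : (μ.withDensity (f ∘ T)).map T = ν.withDensity f := by
  ext S hS
  rw [Measure.map_apply hT.measurable hS, withDensity_apply _ (hT.measurable hS),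
    withDensity_apply _ hS]
  exact hT.setLIntegral_comp_preimage hS hf

theorem setLIntegral_fst_pos_mul {f : ℝ × E → ℝ≥0∞} {φ : E → ℝ≥0∞}
    (hf : Measurable f) (hφ : Measurable φ) :
    ∫⁻ p in {p | 0 < p.1}, φ p.2 * f p = ∫⁻ x, φ x * ∫⁻ s in Ioi 0, f (s, x) := by
  have hset : {p : ℝ × E | 0 < p.1} = Ioi 0 ×ˢ univ := by ext; simp
  have hφf : Measurable fun p : ℝ × E => φ p.2 * f p := by fun_prop
  rw [hset, Measure.volume_eq_prod, ← Measure.prod_restrict, Measure.restrict_univ,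
    lintegral_prod_symm _ hφf.aemeasurable]
  exact lintegral_congr fun x => lintegral_const_mul (φ x) (f := fun s => f (s, x)) (by fun_prop)

theorem setLIntegral_fst_pos_le_iInf {f : ℝ × E → ℝ≥0∞} (hf : Measurable f)
    [IsFiniteMeasure (volume.withDensity f)] (hint : Integrable Prod.snd (volume.withDensity f))
    (hcent : ∫ p in {p | 0 < p.1}, p.2 ∂(volume.withDensity f) = 0) :
    ∫⁻ p in {p | 0 < p.1}, f p ≤
      ⨅ z : E, ∫⁻ x, ENNReal.ofReal (Real.exp ⟪z, x⟫) * ∫⁻ s in Ioi 0, f (s, x) := by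
  have hpos : MeasurableSet {p : ℝ × E | 0 < p.1} := measurable_fst measurableSet_Ioi
  refine le_iInf fun z => ?_
  calc ∫⁻ p in {p | 0 < p.1}, f p
      = (volume.withDensity f).restrict {p | 0 < p.1} univ := by
        rw [Measure.restrict_apply_univ, withDensity_apply _ hpos]
    _ ≤ ∫⁻ p in {p | 0 < p.1}, ENNReal.ofReal (Real.exp ⟪z, p.2⟫) ∂(volume.withDensity f) :=
        measure_univ_le_lintegral_exp_inner hint.integrableOn hcent z
    _ = ∫⁻ p in {p | 0 < p.1}, ENNReal.ofReal (Real.exp ⟪z, p.2⟫) * f p := by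
        rw [setLIntegral_withDensity_eq_setLIntegral_mul _ hf (by fun_prop) hpos]
        simp only [Pi.mul_apply, mul_comm]
    _ = ∫⁻ x, ENNReal.ofReal (Real.exp ⟪z, x⟫) * ∫⁻ s in Ioi 0, f (s, x) :=
        setLIntegral_fst_pos_mul hf (φ := fun x => ENNReal.ofReal (Real.exp ⟪z, x⟫)) (by fun_prop)

theorem lintegral_eq_setLIntegral_fst_pos_add_setLIntegral_fst_neg (g : ℝ × E → ℝ≥0∞) :
    ∫⁻ q, g q = (∫⁻ q in {q | 0 < q.1}, g q) + ∫⁻ q in {q | q.1 < 0}, g q := by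
  have hcompl : ({q | 0 < q.1}ᶜ : Set (ℝ × E)) =ᵐ[volume] {q | q.1 < 0} := by
    have hIic : ({q | 0 < q.1}ᶜ : Set (ℝ × E)) = Prod.fst ⁻¹' Iic 0 := by ext; simp
    rw [hIic]
    exact Measure.quasiMeasurePreserving_fst.preimage_ae_eq Iio_ae_eq_Iic.symm
  have hpos : MeasurableSet {q : ℝ × E | 0 < q.1} := measurable_fst measurableSet_Ioi
  rw [← lintegral_add_compl g hpos, setLIntegral_congr hcompl]

theorem measurePreserving_neg_fst :
    MeasurePreserving (fun p : ℝ × E => (-p.1, p.2)) volume volume :=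
  (Measure.measurePreserving_neg volume).prod (MeasurePreserving.id volume)

/-- The inverse of the adjoint of `shear w`. -/
def dualShear (w : E) (q : ℝ × E) : ℝ × E :=
  (q.1 - ⟪w, q.2⟫, q.2)

theorem measurePreserving_dualShear (w : E) : MeasurePreserving (dualShear w) :=
  Measure.measurePreserving_swap.comp <|
    ((MeasurePreserving.id (volume : Measure E)).skew_product (g := fun y t => t - ⟪w, y⟫)
      (by fun_prop) (ae_of_all _ fun y => map_sub_right_eq_self volume ⟪w, y⟫)).comp
      Measure.measurePreserving_swap

theorem shear_dualShear {E : Type*} [NormedAddCommGroup E] [InnerProductSpace ℝ E] (w : E)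
    (p q : ℝ × E) :
    (shear w p).1 * (dualShear w q).1 + ⟪(shear w p).2, (dualShear w q).2⟫ =
      p.1 * q.1 + ⟪p.2, q.2⟫ := by
  simp only [shear, dualShear, inner_add_left, inner_smul_left, RCLike.conj_to_real]
  ring

theorem finrank_withLp_prod (F : Type*) [NormedAddCommGroup F] [NormedSpace ℝ F]
    [FiniteDimensional ℝ F] :
    Module.finrank ℝ (WithLp 2 (ℝ × F)) = Module.finrank ℝ F + 1 := by
  rw [(WithLp.linearEquiv 2 ℝ (ℝ × F)).finrank_eq, Module.finrank_prod, Module.finrank_self,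
    add_comm]

/-- The functional Santaló inequality on `E` for two functions `f` and `g` in duality. Recentring
`f` amounts to multiplying `g` by an exponential, whence the infimum. -/
def FunctionalSantalo (E : Type*) [NormedAddCommGroup E] [InnerProductSpace ℝ E]
    [FiniteDimensional ℝ E] [MeasurableSpace E] [BorelSpace E] : Prop :=
  ∀ (f g : E → ℝ≥0∞) (K : ℝ≥0∞), Measurable f → Measurable g →
    (∀ x y, f x * g y ≤ K * ENNReal.ofReal (Real.exp (-⟪x, y⟫))) →
    (∫⁻ x, f x) * ⨅ z, ∫⁻ y, ENNReal.ofReal (Real.exp ⟪z, y⟫) * g y ≤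
      K * ENNReal.ofReal (2 * Real.pi) ^ Module.finrank ℝ E

namespace FunctionalSantalo

variable {f g : ℝ × E → ℝ≥0∞} {K : ℝ≥0∞}

theorem setLIntegral_pos_mul_setLIntegral_pos_le (hE : FunctionalSantalo E) (hf : Measurable f)
    (hg : Measurable g)
    (hfg : ∀ p q, f p * g q ≤ K * ENNReal.ofReal (Real.exp (-(p.1 * q.1 + ⟪p.2, q.2⟫))))
    [IsFiniteMeasure (volume.withDensity f)]
    (hint : Integrable Prod.snd (volume.withDensity f))
    (hcent : ∫ p in {p | 0 < p.1}, p.2 ∂(volume.withDensity f) = 0) :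
    (∫⁻ p in {p | 0 < p.1}, f p) * ∫⁻ p in {p | 0 < p.1}, g p ≤
      K * ENNReal.ofReal (Real.pi / 2) * ENNReal.ofReal (2 * Real.pi) ^ Module.finrank ℝ E := by
  have hmarginal : ∀ y x, (∫⁻ t in Ioi 0, g (t, y)) * ∫⁻ s in Ioi 0, f (s, x) ≤
      K * ENNReal.ofReal (Real.pi / 2) * ENNReal.ofReal (Real.exp (-⟪y, x⟫)) := fun y x => by
    rw [mul_comm, mul_right_comm]
    refine setLIntegral_Ioi_mul_setLIntegral_Ioi_le (by fun_prop) (by fun_prop)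
      fun s _ t _ => (hfg (s, x) (t, y)).trans_eq ?_
    rw [mul_assoc, ← ENNReal.ofReal_mul (Real.exp_nonneg _), ← Real.exp_add, real_inner_comm y x,
      neg_add_rev]
  have hmass := setLIntegral_fst_pos_le_iInf hf hint hcent
  have hg_eq : ∫⁻ p in {p | 0 < p.1}, g p = ∫⁻ y, ∫⁻ t in Ioi 0, g (t, y) := by
    simpa using setLIntegral_fst_pos_mul hg (φ := 1) measurable_one
  rw [hg_eq, mul_comm]
  exact (mul_le_mul_right hmass _).trans (hE _ _ _
    (Measurable.lintegral_prod_left' (f := fun p : ℝ × E => g p) hg)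
    (Measurable.lintegral_prod_left' (f := fun p : ℝ × E => f p) hf) hmarginal)

theorem setLIntegral_neg_mul_setLIntegral_neg_le (hE : FunctionalSantalo E) (hf : Measurable f)
    (hg : Measurable g)
    (hfg : ∀ p q, f p * g q ≤ K * ENNReal.ofReal (Real.exp (-(p.1 * q.1 + ⟪p.2, q.2⟫))))
    [IsFiniteMeasure (volume.withDensity f)]
    (hint : Integrable Prod.snd (volume.withDensity f))
    (hcent : ∫ p in {p | p.1 < 0}, p.2 ∂(volume.withDensity f) = 0) :
    (∫⁻ p in {p | p.1 < 0}, f p) * ∫⁻ p in {p | p.1 < 0}, g p ≤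
      K * ENNReal.ofReal (Real.pi / 2) * ENNReal.ofReal (2 * Real.pi) ^ Module.finrank ℝ E := by
  set R : ℝ × E → ℝ × E := fun p => (-p.1, p.2)
  have hR : MeasurePreserving R volume volume := measurePreserving_neg_fst
  have hneg : MeasurableSet {p : ℝ × E | p.1 < 0} := measurable_fst measurableSet_Iio
  have hpre : {p : ℝ × E | 0 < p.1} = R ⁻¹' {p | p.1 < 0} := by ext; simp [R]
  have hmap := map_withDensity_comp hR hf
  have : IsFiniteMeasure (volume.withDensity (f ∘ R)) := by
    have : IsFiniteMeasure ((volume.withDensity (f ∘ R)).map R) := by rwa [hmap]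
    exact Measure.isFiniteMeasure_of_map hR.measurable.aemeasurable
  have hint' : Integrable Prod.snd (volume.withDensity (f ∘ R)) := by
    rw [← hmap, integrable_map_measure (by fun_prop) hR.measurable.aemeasurable] at hint
    exact hint
  have hcent' : ∫ p in {p | 0 < p.1}, p.2 ∂(volume.withDensity (f ∘ R)) = 0 := by
    rw [← hmap, setIntegral_map hneg (by fun_prop) hR.measurable.aemeasurable, ← hpre] at hcent
    exact hcent
  have hle := setLIntegral_pos_mul_setLIntegral_pos_le (K := K) hE (hf.comp hR.measurable)
    (hg.comp hR.measurable) (fun p q => by simpa [R] using hfg (R p) (R q)) hint' hcent'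
  rw [hpre] at hle
  simpa only [Function.comp_apply, hR.setLIntegral_comp_preimage hneg hf,
    hR.setLIntegral_comp_preimage hneg hg] using hle

theorem lintegral_mul_lintegral_le_of_isBalanced (hE : FunctionalSantalo E) (hf : Measurable f)
    (hg : Measurable g)
    (hfg : ∀ p q, f p * g q ≤ K * ENNReal.ofReal (Real.exp (-(p.1 * q.1 + ⟪p.2, q.2⟫))))
    [IsFiniteMeasure (volume.withDensity f)] (hbal : IsBalanced (volume.withDensity f)) :
    (∫⁻ p, f p) * ∫⁻ q, g q ≤
      K * ENNReal.ofReal (2 * Real.pi) ^ (Module.finrank ℝ E + 1) := by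
  have hpos : MeasurableSet {p : ℝ × E | 0 < p.1} := measurable_fst measurableSet_Ioi
  have hneg : MeasurableSet {p : ℝ × E | p.1 < 0} := measurable_fst measurableSet_Iio
  have hmass_pos : ∫⁻ p in {p | 0 < p.1}, f p = (∫⁻ p, f p) / 2 := by
    simpa [withDensity_apply, hpos] using hbal.measure_pos
  have hmass_neg : ∫⁻ p in {p | p.1 < 0}, f p = (∫⁻ p, f p) / 2 := by
    simpa [withDensity_apply, hneg] using hbal.measure_neg
  have hsplit : ∫⁻ q, g q = (∫⁻ q in {q | 0 < q.1}, g q) + ∫⁻ q in {q | q.1 < 0}, g q :=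
    lintegral_eq_setLIntegral_fst_pos_add_setLIntegral_fst_neg g
  have hle_pos := hE.setLIntegral_pos_mul_setLIntegral_pos_le hf hg hfg hbal.integrable_snd
    hbal.setIntegral_pos
  have hle_neg := hE.setLIntegral_neg_mul_setLIntegral_neg_le hf hg hfg hbal.integrable_snd
    hbal.setIntegral_neg
  rw [hmass_pos] at hle_pos
  rw [hmass_neg] at hle_neg
  have htwo : (2 : ℝ≥0∞) * (2 * ENNReal.ofReal (Real.pi / 2)) = ENNReal.ofReal (2 * Real.pi) := by
    simp_rw [← ENNReal.ofReal_ofNat (n := 2)]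
    rw [← ENNReal.ofReal_mul zero_le_two, ← ENNReal.ofReal_mul zero_le_two]
    congr 1
    ring
  calc (∫⁻ p, f p) * ∫⁻ q, g q
      = 2 * ((∫⁻ p, f p) / 2 * (∫⁻ q in {q | 0 < q.1}, g q) +
          (∫⁻ p, f p) / 2 * ∫⁻ q in {q | q.1 < 0}, g q) := by
        rw [hsplit, ← mul_add, ← mul_assoc, ENNReal.mul_div_cancel two_ne_zero ENNReal.ofNat_ne_top]
    _ ≤ 2 * (K * ENNReal.ofReal (Real.pi / 2) * ENNReal.ofReal (2 * Real.pi) ^ Module.finrank ℝ E +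
          K * ENNReal.ofReal (Real.pi / 2) * ENNReal.ofReal (2 * Real.pi) ^ Module.finrank ℝ E) :=
        mul_le_mul_right (add_le_add hle_pos hle_neg) 2
    _ = K * ENNReal.ofReal (2 * Real.pi) ^ (Module.finrank ℝ E + 1) := by
        rw [pow_succ, ← htwo]
        ring

-- An affine map moves `f dx` to a balanced position. The contragredient linear map preserves the
-- duality between `f` and `g`, and the translation becomes the exponential tilt of `g`.
theorem lintegral_mul_iInf_le_of_integrable (hE : FunctionalSantalo E) (hf : Measurable f)
    (hg : Measurable g)
    (hfg : ∀ p q, f p * g q ≤ K * ENNReal.ofReal (Real.exp (-(p.1 * q.1 + ⟪p.2, q.2⟫))))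
    [IsFiniteMeasure (volume.withDensity f)] (hint : Integrable id (volume.withDensity f)) :
    ((∫⁻ p, f p) * ⨅ a : ℝ × E,
        ∫⁻ q, ENNReal.ofReal (Real.exp (a.1 * q.1 + ⟪a.2, q.2⟫)) * g q) ≤
      K * ENNReal.ofReal (2 * Real.pi) ^ (Module.finrank ℝ E + 1) := by
  obtain ⟨a, w, hbal⟩ :=
    exists_isBalanced_map_shear (withDensity_absolutelyContinuous volume f) hint
  have : (volume : Measure (ℝ × E)).IsAddHaarMeasure :=
    inferInstanceAs (Measure.prod volume volume).IsAddHaarMeasure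
  set A : ℝ × E → ℝ × E := fun p => a + shear w p
  set B : ℝ × E → ℝ × E := fun p => shear (-w) (p - a)
  have hA : MeasurePreserving A volume volume :=
    (measurePreserving_add_left volume a).comp (measurePreserving_shear w)
  have hB : MeasurePreserving B volume volume :=
    (measurePreserving_shear (-w)).comp (measurePreserving_sub_right volume a)
  have hAB : ∀ p, A (B p) = p := fun p => by
    ext <;> simp [A, B, shear]
  have hmap : (volume.withDensity f).map B = volume.withDensity (f ∘ A) := by
    rw [← map_withDensity_comp hB (hf.comp hA.measurable)]
    simp only [Function.comp_def, hAB]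
  have : IsFiniteMeasure (volume.withDensity (f ∘ A)) := hmap ▸ inferInstance
  set k : ℝ × E → ℝ≥0∞ := fun q => ENNReal.ofReal (Real.exp (a.1 * q.1 + ⟪a.2, q.2⟫)) * g q
  have hk : Measurable k := by fun_prop
  have hfk : ∀ p q, (f ∘ A) p * (k ∘ dualShear w) q ≤
      K * ENNReal.ofReal (Real.exp (-(p.1 * q.1 + ⟪p.2, q.2⟫))) := fun p q => by
    have hexp : -(p.1 * q.1 + ⟪p.2, q.2⟫) =
        -((A p).1 * (dualShear w q).1 + ⟪(A p).2, (dualShear w q).2⟫) +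
          (a.1 * (dualShear w q).1 + ⟪a.2, (dualShear w q).2⟫) := by
      rw [← shear_dualShear w p q]
      simp only [A, Prod.fst_add, Prod.snd_add, inner_add_left]
      ring
    rw [hexp, Real.exp_add, ENNReal.ofReal_mul (Real.exp_nonneg _), ← mul_assoc]
    exact (mul_left_comm _ _ _).trans_le
      ((mul_le_mul_right (hfg _ _) _).trans_eq (mul_comm _ _))
  have hle := hE.lintegral_mul_lintegral_le_of_isBalanced (hf.comp hA.measurable)
    (hk.comp (measurePreserving_dualShear w).measurable) hfk (hmap ▸ hbal)
  simp only [Function.comp_apply, hA.lintegral_comp hf,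
    (measurePreserving_dualShear w).lintegral_comp hk] at hle
  exact (mul_le_mul_right (iInf_le _ a) _).trans hle

theorem lintegral_mul_iInf_le (hE : FunctionalSantalo E) (hf : Measurable f) (hg : Measurable g)
    (hfg : ∀ p q, f p * g q ≤ K * ENNReal.ofReal (Real.exp (-(p.1 * q.1 + ⟪p.2, q.2⟫)))) :
    ((∫⁻ p, f p) * ⨅ a : ℝ × E,
        ∫⁻ q, ENNReal.ofReal (Real.exp (a.1 * q.1 + ⟪a.2, q.2⟫)) * g q) ≤
      K * ENNReal.ofReal (2 * Real.pi) ^ (Module.finrank ℝ E + 1) := by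
  rw [← iSup_lintegral_truncation hf, ENNReal.iSup_mul]
  refine iSup_le fun k => ?_
  have := isFiniteMeasure_withDensity_truncation (μ := volume) f k
  exact hE.lintegral_mul_iInf_le_of_integrable (measurable_truncation hf k) hg
    (fun p q => (mul_le_mul_left (truncation_le f k p) _).trans (hfg p q))
    (integrable_id_withDensity_truncation f k)

theorem withLp_prod (hE : FunctionalSantalo E) : FunctionalSantalo (WithLp 2 (ℝ × E)) := by
  intro f g K hf hg hfg
  have htoLp := WithLp.volume_preserving_toLp ℝ E
  have hinner : ∀ p q : ℝ × E, ⟪WithLp.toLp 2 p, WithLp.toLp 2 q⟫ = p.1 * q.1 + ⟪p.2, q.2⟫ :=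
    fun p q => by simp [WithLp.prod_inner_apply, mul_comm]
  have hle := hE.lintegral_mul_iInf_le (hf.comp htoLp.measurable) (hg.comp htoLp.measurable)
    fun p q => hinner p q ▸ hfg (WithLp.toLp 2 p) (WithLp.toLp 2 q)
  have htilt : ∀ a : ℝ × E, ∫⁻ y, ENNReal.ofReal (Real.exp ⟪WithLp.toLp 2 a, y⟫) * g y =
      ∫⁻ q : ℝ × E, ENNReal.ofReal (Real.exp (a.1 * q.1 + ⟪a.2, q.2⟫)) * g (WithLp.toLp 2 q) :=
    fun a => by
      rw [← htoLp.lintegral_comp (by fun_prop)]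
      simp only [hinner]
  rw [finrank_withLp_prod, ← htoLp.lintegral_comp hf, ← (WithLp.toLp_surjective 2).iInf_comp]
  simpa only [htilt, Function.comp_apply] using hle

theorem of_linearIsometryEquiv {F : Type*} [NormedAddCommGroup F] [InnerProductSpace ℝ F]
    [FiniteDimensional ℝ F] [MeasurableSpace F] [BorelSpace F] (hF : FunctionalSantalo F)
    (e : F ≃ₗᵢ[ℝ] E) : FunctionalSantalo E := by
  intro f g K hf hg hfg
  have he := e.measurePreserving
  have htilt : ∀ z, ∫⁻ y, ENNReal.ofReal (Real.exp ⟪e z, y⟫) * g y =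
      ∫⁻ y, ENNReal.ofReal (Real.exp ⟪z, y⟫) * g (e y) := fun z => by
    rw [← he.lintegral_comp (by fun_prop)]
    simp only [e.inner_map_map]
  rw [← e.toLinearEquiv.finrank_eq, ← he.lintegral_comp hf, ← e.surjective.iInf_comp]
  simp only [htilt]
  refine hF _ _ K (hf.comp he.measurable) (hg.comp he.measurable) fun x y => ?_
  simpa only [e.inner_map_map] using hfg (e x) (e y)

theorem euclideanSpace (n : ℕ) : FunctionalSantalo (EuclideanSpace ℝ (Fin n)) := by
  induction n with
  | zero =>
    intro f g K _ _ hfg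
    simpa [volume_euclideanSpace_eq_dirac] using hfg 0 0
  | succ n ih =>
    have hrank : Module.finrank ℝ (WithLp 2 (ℝ × EuclideanSpace ℝ (Fin n))) = n + 1 := by
      rw [finrank_withLp_prod, finrank_euclideanSpace_fin]
    exact ih.withLp_prod.of_linearIsometryEquiv
      ((stdOrthonormalBasis ℝ _).reindex (finCongr hrank)).repr

end FunctionalSantalo

theorem functionalSantalo (E : Type*) [NormedAddCommGroup E] [InnerProductSpace ℝ E]
    [FiniteDimensional ℝ E] [MeasurableSpace E] [BorelSpace E] : FunctionalSantalo E :=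
  (FunctionalSantalo.euclideanSpace _).of_linearIsometryEquiv (stdOrthonormalBasis ℝ E).repr.symm

end Santalo

section DualPair

variable {X Y : Type*} [MeasurableSpace X] [MeasurableSpace Y] {μ : Measure X} {ν : Measure Y}
  {h k : X × Y → ℝ} {f f' : X → ℝ} {g g' : Y → ℝ}

theorem integrable_comp_fst_add_comp_snd {π : Measure (X × Y)} (hfst : π.map Prod.fst = μ)
    (hsnd : π.map Prod.snd = ν) (hf : Integrable f μ) (hg : Integrable g ν) :
    Integrable (fun p : X × Y => f p.1 + g p.2) π := by
  subst hfst hsnd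
  exact (hf.comp_measurable measurable_fst).add (hg.comp_measurable measurable_snd)

theorem integral_comp_fst_add_comp_snd {π : Measure (X × Y)} (hfst : π.map Prod.fst = μ)
    (hsnd : π.map Prod.snd = ν) (hf : Integrable f μ) (hg : Integrable g ν) :
    ∫ p : X × Y, (f p.1 + g p.2) ∂π = (∫ x, f x ∂μ) + ∫ y, g y ∂ν := by
  subst hfst hsnd
  rw [integral_map measurable_fst.aemeasurable hf.aestronglyMeasurable,
    integral_map measurable_snd.aemeasurable hg.aestronglyMeasurable]
  exact integral_add (hf.comp_measurable measurable_fst) (hg.comp_measurable measurable_snd)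

/-- Admissible pairs of potentials for the Kantorovich dual of the problem of maximizing
`∫ h dπ` over the couplings `π` of `μ` and `ν`. -/
structure IsDualPair (μ : Measure X) (ν : Measure Y) (h : X × Y → ℝ) (f : X → ℝ) (g : Y → ℝ) :
    Prop where
  measurable_left : Measurable f
  measurable_right : Measurable g
  integrable_left : Integrable f μ
  integrable_right : Integrable g ν
  le_add : ∀ x y, h (x, y) ≤ f x + g y

namespace IsDualPair

theorem mono (H : IsDualPair μ ν k f g) (hle : h ≤ k) : IsDualPair μ ν h f g :=
  { H with le_add := fun x y => (hle (x, y)).trans (H.le_add x y) }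

theorem of_abs (H : IsDualPair μ ν |h| f g) : IsDualPair μ ν h f g :=
  H.mono (le_abs_self h)

theorem neg_of_abs (H : IsDualPair μ ν |h| f g) : IsDualPair μ ν (-h) f g :=
  H.mono (neg_le_abs h)

theorem add (H : IsDualPair μ ν h f g) (H' : IsDualPair μ ν k f' g') :
    IsDualPair μ ν (h + k) (f + f') (g + g') where
  measurable_left := H.measurable_left.add H'.measurable_left
  measurable_right := H.measurable_right.add H'.measurable_right
  integrable_left := H.integrable_left.add H'.integrable_left
  integrable_right := H.integrable_right.add H'.integrable_right
  le_add x y := (add_le_add (H.le_add x y) (H'.le_add x y)).trans_eq (add_add_add_comm ..)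

theorem smul (H : IsDualPair μ ν h f g) {c : ℝ} (hc : 0 ≤ c) :
    IsDualPair μ ν (c • h) (c • f) (c • g) where
  measurable_left := H.measurable_left.const_smul c
  measurable_right := H.measurable_right.const_smul c
  integrable_left := H.integrable_left.smul c
  integrable_right := H.integrable_right.smul c
  le_add x y := (smul_le_smul_of_nonneg_left (H.le_add x y) hc).trans_eq (smul_add ..)

theorem integral_add_add_integral_add (H : IsDualPair μ ν h f g) (H' : IsDualPair μ ν k f' g') :
    (∫ x, (f + f') x ∂μ) + ∫ y, (g + g') y ∂ν =
      ((∫ x, f x ∂μ) + ∫ y, g y ∂ν) + ((∫ x, f' x ∂μ) + ∫ y, g' y ∂ν) := by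
  rw [integral_add' H.integrable_left H'.integrable_left,
    integral_add' H.integrable_right H'.integrable_right, add_add_add_comm]

theorem integral_le {π : Measure (X × Y)} (H : IsDualPair μ ν h f g) (hfst : π.map Prod.fst = μ)
    (hsnd : π.map Prod.snd = ν) (hh : Integrable h π) :
    ∫ p, h p ∂π ≤ (∫ x, f x ∂μ) + ∫ y, g y ∂ν := by
  rw [← integral_comp_fst_add_comp_snd hfst hsnd H.integrable_left H.integrable_right]
  exact integral_mono hh
    (integrable_comp_fst_add_comp_snd hfst hsnd H.integrable_left H.integrable_right)
    fun p => H.le_add p.1 p.2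

theorem integral_nonneg [IsProbabilityMeasure μ] [IsProbabilityMeasure ν]
    (H : IsDualPair μ ν 0 f g) : 0 ≤ (∫ x, f x ∂μ) + ∫ y, g y ∂ν := by
  simpa using H.integral_le (π := μ.prod ν) Measure.fst_prod Measure.snd_prod (integrable_zero ..)

end IsDualPair

theorem isDualPair_one_sub_of_eqOn_one [IsFiniteMeasure μ] [IsFiniteMeasure ν]
    {χ : X × Y → ℝ} (hχ : 0 ≤ χ) {K : Set X} {K' : Set Y}
    (hK : MeasurableSet K) (hK' : MeasurableSet K') (hχK : Set.EqOn χ 1 (K ×ˢ K')) :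
    IsDualPair μ ν (1 - χ) (Kᶜ.indicator 1) (K'ᶜ.indicator 1) where
  measurable_left := measurable_one.indicator hK.compl
  measurable_right := measurable_one.indicator hK'.compl
  integrable_left := (integrable_const 1).indicator hK.compl
  integrable_right := (integrable_const 1).indicator hK'.compl
  le_add x y := by
    have hχ0 := hχ (x, y)
    by_cases hx : x ∈ K <;> by_cases hy : y ∈ K'
    · simp [hx, hy, hχK (Set.mk_mem_prod hx hy)]
    all_goals
      simp only [Pi.sub_apply, Pi.one_apply, Pi.zero_apply, Set.indicator, Set.mem_compl_iff, hx,
        hy, not_true_eq_false, not_false_eq_true, if_true, if_false] at hχ0 ⊢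
      linarith

/-- The functions on `X × Y` whose absolute value is at most `f ⊕ g` for some integrable `f`
and `g`: the domain on which Hahn–Banach is applied. -/
def sumDominated (μ : Measure X) (ν : Measure Y) : Submodule ℝ (X × Y → ℝ) where
  carrier := {h | ∃ f g, IsDualPair μ ν |h| f g}
  add_mem' := by
    rintro h k ⟨f, g, H⟩ ⟨f', g', H'⟩
    exact ⟨_, _, (H.add H').mono (abs_add_le h k)⟩
  zero_mem' := ⟨0, 0, measurable_zero, measurable_zero, integrable_zero .., integrable_zero ..,
    by simp⟩
  smul_mem' := by
    rintro c h ⟨f, g, H⟩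
    exact ⟨_, _, (H.smul (abs_nonneg c)).mono fun p => (abs_mul c (h p)).le⟩

theorem mem_sumDominated_of_abs_le [IsFiniteMeasure μ] {C : ℝ} (hC : ∀ p, |h p| ≤ C) :
    h ∈ sumDominated μ ν :=
  ⟨fun _ => C, 0, measurable_const, measurable_zero, integrable_const C, integrable_zero ..,
    fun x y => (hC (x, y)).trans_eq (add_zero C).symm⟩

/-- The value of the Kantorovich dual problem with gain `h`. -/
noncomputable def dualValue (μ : Measure X) (ν : Measure Y) (h : X × Y → ℝ) : ℝ :=
  sInf {r | ∃ f g, IsDualPair μ ν h f g ∧ r = (∫ x, f x ∂μ) + ∫ y, g y ∂ν}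

theorem le_dualValue {r : ℝ} (hh : h ∈ sumDominated μ ν)
    (hr : ∀ f g, IsDualPair μ ν h f g → r ≤ (∫ x, f x ∂μ) + ∫ y, g y ∂ν) :
    r ≤ dualValue μ ν h := by
  obtain ⟨f, g, H⟩ := hh
  refine le_csInf ⟨_, f, g, H.of_abs, rfl⟩ ?_
  rintro _ ⟨f, g, H, rfl⟩
  exact hr f g H

variable [IsProbabilityMeasure μ] [IsProbabilityMeasure ν]

theorem dualValue_le (hh : h ∈ sumDominated μ ν) (H : IsDualPair μ ν h f g) :
    dualValue μ ν h ≤ (∫ x, f x ∂μ) + ∫ y, g y ∂ν := by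
  obtain ⟨f', g', H'⟩ := hh
  refine csInf_le ⟨-((∫ x, f' x ∂μ) + ∫ y, g' y ∂ν), ?_⟩ ⟨f, g, H, rfl⟩
  rintro _ ⟨f, g, H, rfl⟩
  have hsum := (add_neg_cancel h ▸ H.add H'.neg_of_abs).integral_nonneg
  rw [H.integral_add_add_integral_add H'] at hsum
  exact neg_le_iff_add_nonneg.2 hsum

theorem dualValue_add_le (hh : h ∈ sumDominated μ ν) (hk : k ∈ sumDominated μ ν) :
    dualValue μ ν (h + k) ≤ dualValue μ ν h + dualValue μ ν k := by
  rw [← sub_le_iff_le_add]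
  refine le_dualValue hh fun f g H => ?_
  rw [sub_le_comm]
  refine le_dualValue hk fun f' g' H' => ?_
  rw [sub_le_iff_le_add', ← H.integral_add_add_integral_add H']
  exact dualValue_le (add_mem hh hk) (H.add H')

theorem dualValue_smul {c : ℝ} (hc : 0 < c) (hh : h ∈ sumDominated μ ν) :
    dualValue μ ν (c • h) = c * dualValue μ ν h := by
  have smul_le : ∀ {c : ℝ}, 0 < c → ∀ {h : X × Y → ℝ}, h ∈ sumDominated μ ν →
      dualValue μ ν (c • h) ≤ c * dualValue μ ν h := fun {c} hc h hh => by
    rw [← div_le_iff₀' hc]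
    refine le_dualValue hh fun f g H => ?_
    have := dualValue_le (Submodule.smul_mem _ c hh) (H.smul hc.le)
    simp only [Pi.smul_apply, smul_eq_mul, integral_const_mul, ← mul_add] at this
    rwa [div_le_iff₀' hc]
  refine (smul_le hc hh).antisymm ?_
  have := smul_le (inv_pos.2 hc) (Submodule.smul_mem _ c hh)
  rwa [inv_smul_smul₀ hc.ne', inv_mul_eq_div, le_div_iff₀' hc] at this

theorem dualValue_zero : dualValue μ ν 0 = 0 := by
  have := dualValue_smul two_pos (zero_mem (sumDominated μ ν))
  rw [smul_zero] at this
  linarith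

theorem mul_dualValue_le (hh : h ∈ sumDominated μ ν) (c : ℝ) :
    c * dualValue μ ν h ≤ dualValue μ ν (c • h) := by
  rcases lt_trichotomy c 0 with hc | rfl | hc
  · have hadd := dualValue_add_le (Submodule.smul_mem _ c hh) (Submodule.smul_mem _ (-c) hh)
    rw [← add_smul, add_neg_cancel, zero_smul, dualValue_zero,
      dualValue_smul (neg_pos.2 hc) hh] at hadd
    linarith
  · simp [dualValue_zero]
  · exact (dualValue_smul hc hh).ge

theorem exists_linearMap_eq_dualValue (k : sumDominated μ ν) :
    ∃ L : sumDominated μ ν →ₗ[ℝ] ℝ, L k = dualValue μ ν k ∧ ∀ h, L h ≤ dualValue μ ν h := by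
  let ℓ : sumDominated μ ν →ₗ.[ℝ] ℝ :=
    LinearPMap.mkSpanSingleton' k (dualValue μ ν k) fun c hc => by
      rcases smul_eq_zero.1 hc with rfl | rfl
      · exact zero_smul ..
      · exact (congrArg _ dualValue_zero).trans (smul_zero c)
  obtain ⟨L, hL, hle⟩ := exists_extension_of_le_sublinear ℓ (fun h => dualValue μ ν h)
    (fun c hc h => dualValue_smul hc h.2) (fun h h' => dualValue_add_le h.2 h'.2) (by
      rintro ⟨h, hh⟩
      obtain ⟨c, rfl⟩ := Submodule.mem_span_singleton.1 hh
      rw [LinearPMap.mkSpanSingleton'_apply]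
      exact mul_dualValue_le k.2 c)
  refine ⟨L, ?_, hle⟩
  rw [hL ⟨k, Submodule.mem_span_singleton_self k⟩]
  exact LinearPMap.mkSpanSingleton'_apply_self ..

section SubordinateFunctional

variable {L : sumDominated μ ν →ₗ[ℝ] ℝ}

theorem linearMap_le_of_isDualPair (hL : ∀ h, L h ≤ dualValue μ ν h) {h : sumDominated μ ν}
    (H : IsDualPair μ ν h f g) : L h ≤ (∫ x, f x ∂μ) + ∫ y, g y ∂ν :=
  (hL h).trans (dualValue_le h.2 H)

theorem linearMap_nonneg (hL : ∀ h, L h ≤ dualValue μ ν h) {h : sumDominated μ ν}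
    (hh : (0 : X × Y → ℝ) ≤ h) : 0 ≤ L h := by
  have H : IsDualPair μ ν ((-h : sumDominated μ ν) : X × Y → ℝ) 0 0 :=
    ⟨measurable_zero, measurable_zero, integrable_zero .., integrable_zero ..,
      fun x y => by simpa using hh (x, y)⟩
  simpa using linearMap_le_of_isDualPair hL H

theorem linearMap_eq_integral_add_integral (hL : ∀ h, L h ≤ dualValue μ ν h)
    (hf : Measurable f) (hg : Measurable g) (hfμ : Integrable f μ) (hgν : Integrable g ν)
    {h : sumDominated μ ν} (hh : ∀ x y, h.1 (x, y) = f x + g y) :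
    L h = (∫ x, f x ∂μ) + ∫ y, g y ∂ν := by
  have H : IsDualPair μ ν h f g := ⟨hf, hg, hfμ, hgν, fun x y => (hh x y).le⟩
  have Hneg : IsDualPair μ ν ((-h : sumDominated μ ν) : X × Y → ℝ) (-f) (-g) :=
    ⟨hf.neg, hg.neg, hfμ.neg, hgν.neg, fun x y => by simp [hh, add_comm]⟩
  refine (linearMap_le_of_isDualPair hL H).antisymm ?_
  have := linearMap_le_of_isDualPair hL Hneg
  simp only [map_neg, Pi.neg_apply, integral_neg] at this
  linarith

theorem linearMap_eq_of_forall_eq (hL : ∀ h, L h ≤ dualValue μ ν h) {h : sumDominated μ ν}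
    {c : ℝ} (hh : ∀ p, h.1 p = c) : L h = c := by
  rw [linearMap_eq_integral_add_integral (f := fun _ => c) (g := 0) hL measurable_const
    measurable_zero (integrable_const c) (integrable_zero ..) fun x y => by simp [hh]]
  simp

end SubordinateFunctional

end DualPair

section Representation

open Set CompactlySupported

section RieszMarkovKakutani

/-- The linear functional `L` majorizes integration against `π` on the nonnegative continuous
functions of its domain `V`, which need not be bounded. -/
def IntegralLE {Z : Type*} [TopologicalSpace Z] [MeasurableSpace Z] {V : Submodule ℝ (Z → ℝ)}
    (π : Measure Z) (L : V →ₗ[ℝ] ℝ) : Prop :=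
  ∀ h : V, Continuous h.1 → 0 ≤ h.1 → Integrable h.1 π ∧ ∫ z, h.1 z ∂π ≤ L h

theorem IntegralLE.integral_eq_of_abs_le {Z : Type*} [TopologicalSpace Z] [MeasurableSpace Z]
    [OpensMeasurableSpace Z] {V : Submodule ℝ (Z → ℝ)} {L : V →ₗ[ℝ] ℝ} {π : Measure Z}
    (hπ : IntegralLE π L) {h b : V} (hh : Continuous h.1) (hb : Continuous b.1)
    (hle : |h.1| ≤ b.1) (hLb : ∫ z, b.1 z ∂π = L b) : ∫ z, h.1 z ∂π = L h := by
  have hbint := (hπ b hb ((abs_nonneg _).trans hle)).1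
  have hhint : Integrable h.1 π := hbint.mono' hh.aestronglyMeasurable (ae_of_all _ hle)
  have hadd := (hπ (b + h) (hb.add hh) fun z => neg_le_iff_add_nonneg'.1 (abs_le.1 (hle z)).1).2
  have hsub := (hπ (b - h) (hb.sub hh) fun z => sub_nonneg.2 (abs_le.1 (hle z)).2).2
  rw [map_add, Submodule.coe_add, integral_add' hbint hhint] at hadd
  rw [map_sub, Submodule.coe_sub, integral_sub' hbint hhint] at hsub
  linarith

variable {Z : Type*} [TopologicalSpace Z] [T2Space Z] [LocallyCompactSpace Z] [MeasurableSpace Z]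
  [BorelSpace Z] {V : Submodule ℝ (Z → ℝ)} {L : V →ₗ[ℝ] ℝ}

theorem exists_measure_integral_eq (hV : ∀ f : C_c(Z, ℝ), ⇑f ∈ V)
    (hL : ∀ h : V, (0 : Z → ℝ) ≤ h → 0 ≤ L h) :
    ∃ π : Measure Z, ∀ f : C_c(Z, ℝ), Integrable f π ∧ ∫ z, f z ∂π = L ⟨f, hV f⟩ := by
  let Λ : C_c(Z, ℝ) →ₚ[ℝ] ℝ := PositiveLinearMap.mk₀
    { toFun f := L ⟨f, hV f⟩
      map_add' f g := L.map_add ⟨f, hV f⟩ ⟨g, hV g⟩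
      map_smul' c f := L.map_smul c ⟨f, hV f⟩ } fun f hf => hL ⟨f, hV f⟩ hf
  exact ⟨RealRMK.rieszMeasure Λ, fun f =>
    ⟨f.continuous.integrable_of_hasCompactSupport f.hasCompactSupport,
      RealRMK.integral_rieszMeasure Λ f⟩⟩

theorem setLIntegral_ofReal_le_of_isCompact (hV : ∀ f : C_c(Z, ℝ), ⇑f ∈ V)
    (hL : ∀ h : V, (0 : Z → ℝ) ≤ h → 0 ≤ L h) {π : Measure Z}
    (hπ : ∀ f : C_c(Z, ℝ), Integrable f π ∧ ∫ z, f z ∂π = L ⟨f, hV f⟩)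
    {h : V} (hcont : Continuous h.1) (hnonneg : 0 ≤ h.1) {K : Set Z} (hK : IsCompact K) :
    ∫⁻ z in K, ENNReal.ofReal (h.1 z) ∂π ≤ ENNReal.ofReal (L h) := by
  obtain ⟨χ, hχK, -, hχ, hχ01⟩ :=
    exists_continuous_one_zero_of_isCompact hK isClosed_empty (disjoint_empty K)
  let k : C_c(Z, ℝ) := ⟨⟨fun z => χ z * h.1 z, χ.continuous.mul hcont⟩, hχ.mul_right⟩
  have hk0 : 0 ≤ ⇑k := fun z => mul_nonneg (hχ01 z).1 (hnonneg z)
  have hkh : ∀ z, k z ≤ h.1 z := fun z => mul_le_of_le_one_left (hnonneg z) (hχ01 z).2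
  have hkK : EqOn h.1 k K := fun z hz => by
    rw [← one_mul (h.1 z), ← Pi.one_apply (M := fun _ => ℝ) z, ← hχK hz]; rfl
  calc ∫⁻ z in K, ENNReal.ofReal (h.1 z) ∂π
    _ = ∫⁻ z in K, ENNReal.ofReal (k z) ∂π :=
      setLIntegral_congr_fun hK.measurableSet fun z hz => congrArg _ (hkK hz)
    _ ≤ ∫⁻ z, ENNReal.ofReal (k z) ∂π := setLIntegral_le_lintegral ..
    _ = ENNReal.ofReal (L ⟨k, hV k⟩) := by
      rw [← ofReal_integral_eq_lintegral_ofReal (hπ k).1 (ae_of_all _ hk0), (hπ k).2]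
    _ ≤ ENNReal.ofReal (L h) := ENNReal.ofReal_le_ofReal <| by
      rw [← sub_nonneg, ← map_sub]
      exact hL _ fun z => sub_nonneg.2 (hkh z)

theorem integralLE_of_forall_integral_eq [SigmaCompactSpace Z] (hV : ∀ f : C_c(Z, ℝ), ⇑f ∈ V)
    (hL : ∀ h : V, (0 : Z → ℝ) ≤ h → 0 ≤ L h) {π : Measure Z}
    (hπ : ∀ f : C_c(Z, ℝ), Integrable f π ∧ ∫ z, f z ∂π = L ⟨f, hV f⟩) : IntegralLE π L := by
  intro h hcont hnonneg
  have hle : ∫⁻ z, ENNReal.ofReal (h.1 z) ∂π ≤ ENNReal.ofReal (L h) := by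
    rw [← setLIntegral_univ, ← iUnion_compactCovering Z, setLIntegral_iUnion_of_directed _
      (directed_of_isDirected_le fun _ _ h => compactCovering_subset Z h)]
    exact iSup_le fun n => setLIntegral_ofReal_le_of_isCompact hV hL hπ hcont hnonneg
      (isCompact_compactCovering Z n)
  refine ⟨⟨hcont.aestronglyMeasurable, ?_⟩, ?_⟩
  · rw [hasFiniteIntegral_iff_ofReal (ae_of_all _ hnonneg)]
    exact hle.trans_lt ENNReal.ofReal_lt_top
  · rw [integral_eq_lintegral_of_nonneg_ae (ae_of_all _ hnonneg) hcont.aestronglyMeasurable]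
    exact ENNReal.toReal_le_of_le_ofReal (hL h hnonneg) hle

end RieszMarkovKakutani

theorem coe_mem_sumDominated {X Y : Type*} [TopologicalSpace X] [TopologicalSpace Y]
    [MeasurableSpace X] [MeasurableSpace Y] {μ : Measure X} [IsFiniteMeasure μ] {ν : Measure Y}
    (f : C_c(X × Y, ℝ)) : ⇑f ∈ sumDominated μ ν := by
  obtain ⟨C, hC⟩ := f.hasCompactSupport.exists_bound_of_continuous f.continuous
  exact mem_sumDominated_of_abs_le hC

section Marginals

variable {X Y : Type*} [TopologicalSpace X] [MeasurableSpace X] [BorelSpace X]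
  [TopologicalSpace Y] [MeasurableSpace Y] [BorelSpace Y] [SecondCountableTopologyEither X Y]
  {μ : Measure X} {ν : Measure Y} [IsProbabilityMeasure μ] [IsProbabilityMeasure ν]
  {L : sumDominated μ ν →ₗ[ℝ] ℝ} {π : Measure (X × Y)} [IsProbabilityMeasure π]

theorem IntegralLE.integral_eq_of_forall_abs_le (hπ : IntegralLE π L)
    (hL : ∀ h, L h ≤ dualValue μ ν h) {h : sumDominated μ ν} (hh : Continuous h.1) {C : ℝ}
    (hC : ∀ p, |h.1 p| ≤ C) : ∫ p, h.1 p ∂π = L h := by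
  let b : sumDominated μ ν := ⟨fun _ => C, mem_sumDominated_of_abs_le fun _ => le_rfl⟩
  refine hπ.integral_eq_of_abs_le (b := b) hh continuous_const hC ?_
  rw [linearMap_eq_of_forall_eq hL fun _ => rfl, integral_const, probReal_univ, one_smul]

theorem IntegralLE.map_fst_eq [HasOuterApproxClosed X] (hπ : IntegralLE π L)
    (hL : ∀ h, L h ≤ dualValue μ ν h) : π.map Prod.fst = μ := by
  have := Measure.isProbabilityMeasure_map (μ := π) measurable_fst.aemeasurable
  refine ext_of_forall_integral_eq_of_IsFiniteMeasure fun u => ?_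
  have hu : ∀ p : X × Y, |u p.1| ≤ ‖u‖ := fun p => u.norm_coe_le_norm p.1
  let k : sumDominated μ ν := ⟨fun p => u p.1, mem_sumDominated_of_abs_le hu⟩
  have hLk : L k = (∫ x, u x ∂μ) + ∫ _, 0 ∂ν := linearMap_eq_integral_add_integral hL
    u.continuous.measurable measurable_const (u.integrable μ) (integrable_zero ..)
    fun x _ => (add_zero (u x)).symm
  rw [integral_zero, add_zero] at hLk
  rw [integral_map measurable_fst.aemeasurable u.continuous.aestronglyMeasurable, ← hLk]
  exact hπ.integral_eq_of_forall_abs_le hL (h := k) (u.continuous.comp continuous_fst) hu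

theorem IntegralLE.map_snd_eq [HasOuterApproxClosed Y] (hπ : IntegralLE π L)
    (hL : ∀ h, L h ≤ dualValue μ ν h) : π.map Prod.snd = ν := by
  have := Measure.isProbabilityMeasure_map (μ := π) measurable_snd.aemeasurable
  refine ext_of_forall_integral_eq_of_IsFiniteMeasure fun u => ?_
  have hu : ∀ p : X × Y, |u p.2| ≤ ‖u‖ := fun p => u.norm_coe_le_norm p.2
  let k : sumDominated μ ν := ⟨fun p => u p.2, mem_sumDominated_of_abs_le hu⟩
  have hLk : L k = (∫ _, 0 ∂μ) + ∫ y, u y ∂ν := linearMap_eq_integral_add_integral hL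
    measurable_const u.continuous.measurable (integrable_zero ..) (u.integrable ν)
    fun _ y => (zero_add (u y)).symm
  rw [integral_zero, zero_add] at hLk
  rw [integral_map measurable_snd.aemeasurable u.continuous.aestronglyMeasurable, ← hLk]
  exact hπ.integral_eq_of_forall_abs_le hL (h := k) (u.continuous.comp continuous_snd) hu

end Marginals

variable {X Y : Type*} [TopologicalSpace X] [T2Space X] [LocallyCompactSpace X]
  [SecondCountableTopology X] [MeasurableSpace X] [BorelSpace X] [TopologicalSpace Y] [T2Space Y]
  [LocallyCompactSpace Y] [SecondCountableTopology Y] [MeasurableSpace Y] [BorelSpace Y]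

theorem exists_isCompact_measureReal_compl_lt (μ : Measure X) [IsFiniteMeasure μ] {ε : ℝ}
    (hε : 0 < ε) : ∃ K, IsCompact K ∧ μ.real Kᶜ < ε := by
  obtain ⟨K, -, hK, hKε⟩ := MeasurableSet.univ.exists_isCompact_sdiff_lt (measure_ne_top μ univ)
    (ENNReal.ofReal_pos.2 hε).ne'
  rw [← compl_eq_univ_sdiff] at hKε
  exact ⟨K, hK, ENNReal.toReal_lt_of_lt_ofReal hKε⟩

variable {μ : Measure X} {ν : Measure Y} [IsProbabilityMeasure μ] [IsProbabilityMeasure ν]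
  {L : sumDominated μ ν →ₗ[ℝ] ℝ}

-- Tightness of the marginals prevents the representing measure from losing mass at infinity.
theorem one_le_measureReal_univ (hL : ∀ h, L h ≤ dualValue μ ν h) {π : Measure (X × Y)}
    [IsFiniteMeasure π]
    (hπ : ∀ f : C_c(X × Y, ℝ), Integrable f π ∧ ∫ p, f p ∂π = L ⟨f, coe_mem_sumDominated f⟩) :
    1 ≤ π.real univ := by
  refine le_of_forall_pos_le_add fun ε hε => ?_
  obtain ⟨K, hK, hKε⟩ := exists_isCompact_measureReal_compl_lt μ (half_pos hε)
  obtain ⟨K', hK', hKε'⟩ := exists_isCompact_measureReal_compl_lt ν (half_pos hε)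
  obtain ⟨χ, hχK, -, hχ, hχ01⟩ := exists_continuous_one_zero_of_isCompact (hK.prod hK')
    isClosed_empty (disjoint_empty _)
  let k : C_c(X × Y, ℝ) := ⟨χ, hχ⟩
  let one : sumDominated μ ν := ⟨1, mem_sumDominated_of_abs_le fun _ => abs_one.le⟩
  have hπk : ∫ p, k p ∂π ≤ π.real univ := by
    simpa using integral_mono (hπ k).1 (integrable_const 1) fun p => (hχ01 p).2
  have hLone : L one = 1 := linearMap_eq_of_forall_eq hL fun _ => rfl
  have hLk : L (one - ⟨k, coe_mem_sumDominated k⟩) ≤ μ.real Kᶜ + ν.real K'ᶜ := by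
    rw [← integral_indicator_one hK.measurableSet.compl,
      ← integral_indicator_one hK'.measurableSet.compl]
    exact linearMap_le_of_isDualPair hL (isDualPair_one_sub_of_eqOn_one (fun p => (hχ01 p).1)
      hK.measurableSet hK'.measurableSet hχK)
  rw [map_sub, hLone, ← (hπ k).2] at hLk
  linarith

theorem exists_isProbabilityMeasure_integralLE (hL : ∀ h, L h ≤ dualValue μ ν h) :
    ∃ π : Measure (X × Y), IsProbabilityMeasure π ∧ IntegralLE π L := by
  have hnonneg : ∀ h : sumDominated μ ν, 0 ≤ h.1 → 0 ≤ L h := fun h => linearMap_nonneg hL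
  obtain ⟨π, hπ⟩ := exists_measure_integral_eq coe_mem_sumDominated hnonneg
  have hle := integralLE_of_forall_integral_eq coe_mem_sumDominated hnonneg hπ
  refine ⟨π, ?_, hle⟩
  let one : sumDominated μ ν := ⟨1, mem_sumDominated_of_abs_le fun _ => abs_one.le⟩
  obtain ⟨hint, hone⟩ := hle one continuous_one zero_le_one
  have : IsFiniteMeasure π := (integrable_const_iff_isFiniteMeasure (one_ne_zero' ℝ)).1 hint
  have hLone : L one = 1 := linearMap_eq_of_forall_eq hL fun _ => rfl
  have hle_one : π.real univ ≤ 1 := by simpa [one, hLone] using hone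
  rw [isProbabilityMeasure_iff_real]
  exact hle_one.antisymm (one_le_measureReal_univ hL hπ)

theorem exists_coupling_integral_eq_dualValue {h : X × Y → ℝ} (hh : Continuous h) {f : X → ℝ}
    {g : Y → ℝ} (hf : Continuous f) (hg : Continuous g) (H : IsDualPair μ ν |h| f g) :
    ∃ π : Measure (X × Y), π.map Prod.fst = μ ∧ π.map Prod.snd = ν ∧
      ∫ p, h p ∂π = dualValue μ ν h := by
  obtain ⟨L, hLh, hL⟩ := exists_linearMap_eq_dualValue ⟨h, f, g, H⟩
  obtain ⟨π, _, hπ⟩ := exists_isProbabilityMeasure_integralLE hL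
  have hfst := hπ.map_fst_eq hL
  have hsnd := hπ.map_snd_eq hL
  have hnonneg : ∀ p : X × Y, 0 ≤ f p.1 + g p.2 :=
    fun p => (abs_nonneg (h p)).trans (H.le_add p.1 p.2)
  let b : sumDominated μ ν := ⟨fun p => f p.1 + g p.2, f, g, H.measurable_left, H.measurable_right,
    H.integrable_left, H.integrable_right, fun x y => (abs_of_nonneg (hnonneg (x, y))).le⟩
  have hLb : L b = (∫ x, f x ∂μ) + ∫ y, g y ∂ν := linearMap_eq_integral_add_integral hL
    H.measurable_left H.measurable_right H.integrable_left H.integrable_right fun _ _ => rfl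
  refine ⟨π, hfst, hsnd, (hπ.integral_eq_of_abs_le (b := b) hh ?_ ?_ ?_).trans hLh⟩
  · exact (hf.comp continuous_fst).add (hg.comp continuous_snd)
  · exact fun p => H.le_add p.1 p.2
  · rw [hLb]
    exact integral_comp_fst_add_comp_snd hfst hsnd H.integrable_left H.integrable_right

end Representation

section Talagrand

variable {E : Type*} [NormedAddCommGroup E] [InnerProductSpace ℝ E] [MeasurableSpace E]
  [BorelSpace E] {μ ν : Measure E}

theorem isDualPair_abs_inner (hμ : Integrable (fun x => ‖x‖ ^ 2) μ)
    (hν : Integrable (fun x => ‖x‖ ^ 2) ν) :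
    IsDualPair μ ν |fun p : E × E => ⟪p.1, p.2⟫| (fun x => ‖x‖ ^ 2) fun y => ‖y‖ ^ 2 where
  measurable_left := by fun_prop
  measurable_right := by fun_prop
  integrable_left := hμ
  integrable_right := hν
  le_add x y := (abs_real_inner_le_norm x y).trans <| by
    nlinarith [two_mul_le_add_sq ‖x‖ ‖y‖, mul_nonneg (norm_nonneg x) (norm_nonneg y)]

theorem bddBelow_range_neg_integral_inner [SecondCountableTopology E]
    (hμ : Integrable (fun x => ‖x‖ ^ 2) μ) (hν : Integrable (fun x => ‖x‖ ^ 2) ν) :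
    BddBelow (Set.range fun π : {π : Measure (E × E) // IsCoupling π μ ν} =>
      -∫ p, ⟪p.1, p.2⟫ ∂π.1) := by
  refine ⟨-((∫ x, ‖x‖ ^ 2 ∂μ) + ∫ y, ‖y‖ ^ 2 ∂ν), ?_⟩
  rintro _ ⟨⟨π, hfst, hsnd⟩, rfl⟩
  have H := isDualPair_abs_inner hμ hν
  have hinner : Integrable (fun p : E × E => ⟪p.1, p.2⟫) π :=
    (integrable_comp_fst_add_comp_snd hfst hsnd hμ hν).mono'
      (Measurable.aestronglyMeasurable (by fun_prop)) (ae_of_all _ fun p => H.le_add p.1 p.2)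
  exact neg_le_neg (H.of_abs.integral_le hfst hsnd hinner)

variable [FiniteDimensional ℝ E] [IsProbabilityMeasure μ] [IsProbabilityMeasure ν] {h₁ h₂ : E → ℝ}

theorem ofReal_exp_neg_integral_sub_entropy_le_iInf {f : E → ℝ}
    (hμac : μ = volume.withDensity fun x => ENNReal.ofReal (h₁ x))
    (hμint : Integrable (fun x : E => x) μ) (hμent : Integrable (fun x => Real.log (h₁ x)) μ)
    (hcent : ∫ x, x ∂μ = 0) (hf : Integrable f μ) :
    ENNReal.ofReal (Real.exp (-(∫ x, f x ∂μ) - ∫ x, Real.log (h₁ x) ∂μ)) ≤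
      ⨅ z : E, ∫⁻ x, ENNReal.ofReal (Real.exp ⟪z, x⟫) * ENNReal.ofReal (Real.exp (-f x)) := by
  refine le_iInf fun z => ?_
  have hz : ∫ x, ⟪z, x⟫ ∂μ = 0 := (integral_inner hμint z).trans (by rw [hcent, inner_zero_right])
  have hzint : Integrable (fun x => ⟪z, x⟫) μ := hμint.const_inner z
  have hgibbs := ofReal_exp_integral_sub_integral_log_le hμac (hzint.sub hf) hμent
  rw [integral_sub' hzint hf, hz, zero_sub] at hgibbs
  refine hgibbs.trans_eq (lintegral_congr fun x => ?_)
  rw [← ENNReal.ofReal_mul (Real.exp_pos _).le, ← Real.exp_add, ← sub_eq_add_neg, Pi.sub_apply]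

theorem neg_integral_add_integral_le_of_isDualPair_inner {f g : E → ℝ}
    (hμac : μ = volume.withDensity fun x => ENNReal.ofReal (h₁ x))
    (hνac : ν = volume.withDensity fun x => ENNReal.ofReal (h₂ x))
    (hμint : Integrable (fun x : E => x) μ) (hμent : Integrable (fun x => Real.log (h₁ x)) μ)
    (hνent : Integrable (fun x => Real.log (h₂ x)) ν) (hcent : ∫ x, x ∂μ = 0)
    (H : IsDualPair μ ν (fun p => ⟪p.1, p.2⟫) f g) :
    -((∫ x, f x ∂μ) + ∫ y, g y ∂ν) ≤ (∫ x, Real.log (h₁ x) ∂μ) + (∫ x, Real.log (h₂ x) ∂ν) +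
      Module.finrank ℝ E * Real.log (2 * Real.pi) := by
  have hf := ofReal_exp_neg_integral_sub_entropy_le_iInf hμac hμint hμent hcent H.integrable_left
  have hg := ofReal_exp_integral_sub_integral_log_le hνac H.integrable_right.neg hνent
  rw [integral_neg'] at hg
  have hsantalo := functionalSantalo E (fun y => ENNReal.ofReal (Real.exp (-g y)))
    (fun x => ENNReal.ofReal (Real.exp (-f x))) 1 H.measurable_right.neg.exp.ennreal_ofReal
    H.measurable_left.neg.exp.ennreal_ofReal fun y x => by
      rw [← ENNReal.ofReal_mul (Real.exp_pos _).le, ← Real.exp_add, one_mul]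
      have := H.le_add x y
      gcongr
      rw [real_inner_comm]
      linarith
  have hexp := (mul_le_mul' hg hf).trans hsantalo
  rw [one_mul, ← ENNReal.ofReal_mul (Real.exp_pos _).le, ← Real.exp_add,
    ← ENNReal.ofReal_pow Real.two_pi_pos.le, ENNReal.ofReal_le_ofReal_iff (by positivity),
    ← Real.le_log_iff_exp_le (by positivity), Real.log_pow] at hexp
  linarith

theorem symmetrized_talagrand_reformulated_general
    (hμac : μ = volume.withDensity fun x => ENNReal.ofReal (h₁ x))
    (hνac : ν = volume.withDensity fun x => ENNReal.ofReal (h₂ x))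
    (hμ2 : Integrable (fun x => ‖x‖ ^ 2) μ) (hν2 : Integrable (fun x => ‖x‖ ^ 2) ν)
    (hμent : Integrable (fun x => Real.log (h₁ x)) μ)
    (hνent : Integrable (fun x => Real.log (h₂ x)) ν) (hcent : ∫ x, x ∂μ = 0) :
    ⨅ π : {π : Measure (E × E) // IsCoupling π μ ν}, -∫ p, ⟪p.1, p.2⟫ ∂π.1 ≤
      (∫ x, Real.log (h₁ x) ∂μ) + (∫ x, Real.log (h₂ x) ∂ν) +
        Module.finrank ℝ E * Real.log (2 * Real.pi) := by
  have H := isDualPair_abs_inner hμ2 hν2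
  have hμint : Integrable (fun x : E => x) μ :=
    ((memLp_two_iff_integrable_sq_norm aestronglyMeasurable_id).2 hμ2).integrable one_le_two
  obtain ⟨π, hfst, hsnd, hπ⟩ := exists_coupling_integral_eq_dualValue (by fun_prop)
    (by fun_prop) (by fun_prop) H
  calc ⨅ π : {π : Measure (E × E) // IsCoupling π μ ν}, -∫ p, ⟪p.1, p.2⟫ ∂π.1
    _ ≤ -∫ p, ⟪p.1, p.2⟫ ∂π :=
      ciInf_le (bddBelow_range_neg_integral_inner hμ2 hν2) ⟨π, hfst, hsnd⟩
    _ = -dualValue μ ν fun p => ⟪p.1, p.2⟫ := congrArg _ hπ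
    _ ≤ _ := neg_le.1 <| le_dualValue ⟨_, _, H⟩ fun f g Hfg => neg_le.1 <|
      neg_integral_add_integral_le_of_isDualPair_inner hμac hνac hμint hμent hνent hcent Hfg

end Talagrand

/-- **Reformulated symmetrized Talagrand inequality**: for a centered probability measure
`μ = h₁ dx` and a probability measure `ν = h₂ dx` on `ℝ^d`, with finite second moments and
finite entropies relative to Lebesgue measure,
`inf_π (-∫ x·y dπ) ≤ Ent_dx(μ) + Ent_dx(ν) + d log(2π)`,
the infimum running over all couplings `π` of `μ` and `ν`, and `Ent_dx(μ) = ∫ log h₁ dμ`. -/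
theorem symmetrized_talagrand_reformulated (d : ℕ) (hd : 1 ≤ d)
    (μ ν : Measure (EuclideanSpace ℝ (Fin d)))
    [IsProbabilityMeasure μ] [IsProbabilityMeasure ν]
    (h₁ h₂ : EuclideanSpace ℝ (Fin d) → ℝ)
    (hμac : μ = volume.withDensity fun x => ENNReal.ofReal (h₁ x))
    (hνac : ν = volume.withDensity fun x => ENNReal.ofReal (h₂ x))
    (hμ2 : Integrable (fun x => ‖x‖ ^ 2) μ) (hν2 : Integrable (fun x => ‖x‖ ^ 2) ν)
    (hμent : Integrable (fun x => Real.log (h₁ x)) μ)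
    (hνent : Integrable (fun x => Real.log (h₂ x)) ν)
    (hcent : ∫ x, x ∂μ = 0) :
    ⨅ π : {π : Measure (EuclideanSpace ℝ (Fin d) × EuclideanSpace ℝ (Fin d)) //
        IsCoupling π μ ν}, -∫ p, ⟪p.1, p.2⟫ ∂π.1 ≤
      (∫ x, Real.log (h₁ x) ∂μ) + (∫ x, Real.log (h₂ x) ∂ν) + d * Real.log (2 * Real.pi) := by
  simpa using symmetrized_talagrand_reformulated_general hμac hνac hμ2 hν2 hμent hνent hcent
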